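/- (Corollary 4.1) Assume the integrality condition on (μ,ν). For every j ∈ ℕ, the squared L²-norm of Λ_j^{μ,ν} is ∫₀^∞ (Λ_j^{μ,ν}(x))² x^{μ+ν+1} dx = (2^{μ+ν−1} Γ(j+(μ+ν+2)/2) Γ(j+(μ−ν+2)/2))/(j! (2j+μ+1) Γ(j+μ+1)). -/

import Mathlib

open MeasureTheory Real Filter Set Metric

noncomputable section

/-- Normalized Bessel function of the first kind: `J̃_α(x) = (x/2)^{-α} J_α(x)`,
given by its (entire) power series. -/
def besselJt (α x : ℝ) : ℝ :=
  ∑' m : ℕ, (-1) ^ m / (m.factorial * Real.Gamma (m + α + 1)) * (x / 2) ^ (2 * m)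

/-- Bessel function of the first kind `J_α`. -/
def besselJ (α x : ℝ) : ℝ :=
  ∑' m : ℕ, (-1) ^ m / (m.factorial * Real.Gamma (m + α + 1)) * (x / 2) ^ (2 * (m : ℝ) + α)

/-- Normalized modified Bessel function `Ĩ_α(x) = (x/2)^{-α} I_α(x)`,
given by its (entire, even) power series. -/
def besselIt (α x : ℝ) : ℝ :=
  ∑' m : ℕ, (x / 2) ^ (2 * m) / (m.factorial * Real.Gamma (m + α + 1))

/-- Modified Bessel function of the first kind `I_α`. -/
def besselI (α x : ℝ) : ℝ :=
  ∑' m : ℕ, (x / 2) ^ (2 * (m : ℝ) + α) / (m.factorial * Real.Gamma (m + α + 1))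

/-- Modified Bessel function of the second kind,
`K_α(x) = lim_{β→α} (π/2)(I_{−β}(x) − I_β(x))/sin(βπ)`. -/
def besselK (α x : ℝ) : ℝ :=
  limUnder (nhdsWithin α {α}ᶜ) fun β =>
    Real.pi / 2 * (besselI (-β) x - besselI β x) / Real.sin (β * Real.pi)

/-- Normalized K-Bessel function `K̃_α(x) = (x/2)^{-α} K_α(x)`. -/
def besselKt (α x : ℝ) : ℝ := (x / 2) ^ (-α) * besselK α x

/-- Normalized Gegenbauer polynomial `C̃_n^λ = Γ(λ) C_n^λ`, where `C_n^λ` is defined via the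
generating function `(1 − 2xt + t²)^{−λ} = Σ_{n≥0} C_n^λ(x) tⁿ`; explicitly,
`C̃_n^λ(x) = Σ_{k=0}^{⌊n/2⌋} (−1)^k Γ(λ+n−k)/(k!(n−2k)!) (2x)^{n−2k}`.
This expression also gives the limit value `C̃_n^0 = lim_{λ→0+} Γ(λ) C_n^λ` for `n ≥ 1`. -/
def gegenbauerCt (n : ℕ) (l x : ℝ) : ℝ :=
  ∑ k ∈ Finset.range (n / 2 + 1),
    (-1) ^ k * Real.Gamma (l + n - k) / (k.factorial * (n - 2 * k).factorial)
      * (2 * x) ^ (n - 2 * k)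

/-- Laguerre polynomial `L_n^μ(x) = Σ_{k=0}^n (−1)^k binom(n+μ, n−k) x^k/k!`
(with nonnegative integer parameter `μ`). -/
def laguerreL (n μ : ℕ) (x : ℝ) : ℝ :=
  ∑ k ∈ Finset.range (n + 1),
    (-1) ^ k * (Nat.choose (n + μ) (n - k)) * x ^ k / k.factorial

/-- The Euler operator `θ = x d/dx`. -/
def eulerOp (u : ℝ → ℝ) : ℝ → ℝ := fun x => x * deriv u x

/-- `(θ+c)(θ+c+ν)u − x² u`, i.e. the operator `Q_ν(θ+c)` applied to `u`. -/
def besselQ (ν c : ℝ) (u : ℝ → ℝ) : ℝ → ℝ := fun x =>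
  eulerOp (fun y => eulerOp u y + (c + ν) * u y) x
    + c * (eulerOp u x + (c + ν) * u x) - x ^ 2 * u x

/-- The fourth order differential operator
`D_{μ,ν} = x^{−2}((θ+μ)(θ+μ+ν) − x²)(θ(θ+ν) − x²)`. -/
def Dop (μ ν : ℝ) (u : ℝ → ℝ) : ℝ → ℝ := fun x =>
  besselQ ν μ (besselQ ν 0 u) x / x ^ 2

/-- The generating function
`G^{μ,ν}(t,x) = (1−t)^{−(μ+ν+2)/2} Ĩ_{μ/2}(tx/(1−t)) K̃_{ν/2}(x/(1−t))`. -/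
def genFun (μ ν t x : ℝ) : ℝ :=
  (1 - t) ^ (-(μ + ν + 2) / 2) * besselIt (μ / 2) (t * x / (1 - t))
    * besselKt (ν / 2) (x / (1 - t))

/-- The eigenfunctions `Λ_j^{μ,ν}`, defined as the Taylor coefficients in `t` at `t = 0` of the
generating function `G^{μ,ν}(t,x) = Σ_{j≥0} Λ_j^{μ,ν}(x) t^j`. -/
def LambdaF (μ ν : ℝ) (j : ℕ) (x : ℝ) : ℝ :=
  iteratedDeriv j (fun t => genFun μ ν t x) 0 / j.factorial

/-- The integrality condition: `μ ≥ ν ≥ −1` are integers of the same parity,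
not both equal to `−1`. -/
def IntCond (μ ν : ℤ) : Prop :=
  -1 ≤ ν ∧ ν ≤ μ ∧ Even (μ - ν) ∧ ¬(μ = -1 ∧ ν = -1)

end

/-- integrand of the auxiliary Macdonald-type function -/
noncomputable def kker (p z s : ℝ) : ℝ := s ^ (-p - 1) * Real.exp (-s - z / s)

/-- auxiliary Macdonald-type function `k_p(z) = ∫ s^{-p-1} e^{-s-z/s} ds` -/
noncomputable def kf (p z : ℝ) : ℝ := ∫ s in Ioi (0:ℝ), kker p z s

lemma kker_meas (p z : ℝ) (μ : Measure ℝ) : AEStronglyMeasurable (kker p z) μ := by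
  apply Measurable.aestronglyMeasurable
  unfold kker
  fun_prop

lemma kker_nonneg (p z s : ℝ) (hs : 0 < s) : 0 ≤ kker p z s := by
  unfold kker; positivity

lemma kker_bound (p z s : ℝ) (hz : 0 < z) (hs : 0 < s) (N : ℕ) :
    kker p z s ≤ (N.factorial / z ^ N) * (Real.exp (-s) * s ^ ((N - p) - 1)) := by
  unfold kker
  have h1 : (z / s) ^ N / N.factorial ≤ Real.exp (z / s) :=
    Real.pow_div_factorial_le_exp _ (by positivity) N
  have h2 : Real.exp (-(z / s)) ≤ N.factorial / z ^ N * s ^ N := by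
    rw [Real.exp_neg, inv_le_comm₀ (Real.exp_pos _) (by positivity)]
    refine le_trans (le_of_eq ?_) h1
    rw [div_pow]
    field_simp
  have h3 : s ^ ((N - p) - 1 : ℝ) = s ^ (-p - 1) * s ^ N := by
    rw [← Real.rpow_natCast, ← Real.rpow_add hs]; congr 1; ring
  rw [h3, sub_eq_add_neg (-s), Real.exp_add]
  calc s ^ (-p - 1) * (Real.exp (-s) * Real.exp (-(z / s)))
      ≤ s ^ (-p - 1) * (Real.exp (-s) * (N.factorial / z ^ N * s ^ N)) := by gcongr
    _ = _ := by ring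

lemma kker_int (p z : ℝ) (hz : 0 < z) : IntegrableOn (kker p z) (Ioi 0) := by
  obtain ⟨N, hN⟩ := exists_nat_gt p
  have := (Real.GammaIntegral_convergent (s := N - p) (by linarith)).const_mul (N.factorial / z ^ N)
  refine Integrable.mono' this (kker_meas _ _ _) ?_
  filter_upwards [ae_restrict_mem measurableSet_Ioi] with s hs
  rw [Real.norm_of_nonneg (kker_nonneg _ _ _ hs)]
  exact kker_bound p z s hz hs N

lemma kf_pos (p z : ℝ) (_hz : 0 < z) : 0 ≤ kf p z :=
  setIntegral_nonneg measurableSet_Ioi fun s hs => kker_nonneg p z s hs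

lemma kker_mono (p z y s : ℝ) (hs : 0 < s) (h : y ≤ z) : kker p z s ≤ kker p y s := by
  unfold kker; gcongr

lemma kf_hasDerivAt (p z : ℝ) (hz : 0 < z) : HasDerivAt (kf p) (-kf (p + 1) z) z := by
  have key := hasDerivAt_integral_of_dominated_loc_of_deriv_le
    (μ := volume.restrict (Ioi (0:ℝ))) (F := kker p) (F' := fun z s => -kker (p + 1) z s)
    (x₀ := z) (s := Ioi (z / 2)) (bound := kker (p + 1) (z / 2)) (Ioi_mem_nhds (by linarith))
    (Eventually.of_forall fun x => kker_meas _ _ _) (kker_int p z hz) (kker_meas _ _ _).neg ?_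
    (kker_int _ _ (by linarith)) ?_
  · have := key.2
    rw [integral_neg] at this
    exact this
  · filter_upwards [ae_restrict_mem measurableSet_Ioi] with s hs x hx
    rw [norm_neg, Real.norm_of_nonneg (kker_nonneg _ _ _ hs)]
    exact kker_mono _ _ _ _ hs (le_of_lt hx)
  · filter_upwards [ae_restrict_mem measurableSet_Ioi] with s hs x hx
    unfold kker
    have hs' : (0:ℝ) < s := hs
    have h1 : HasDerivAt (fun x : ℝ => -s - x / s) (-(1 / s)) x := by
      simpa using ((hasDerivAt_id x).div_const s).const_sub (-s)
    have h2 := (h1.exp).const_mul (s ^ (-p - 1))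
    refine h2.congr_deriv ?_
    rw [show -(p + 1) - 1 = (-p - 1) - 1 by ring, Real.rpow_sub_one hs'.ne' (-p - 1)]
    ring

/-- symmetry -/
lemma kf_neg (p z : ℝ) (hz : 0 < z) : kf (-p) z = z ^ p * kf p z := by
  unfold kf
  have h1 := integral_comp_rpow_Ioi (fun s => kker (-p) z s) (p := -1) (by norm_num)
  have h2 := integral_comp_mul_left_Ioi
    (fun x => (|(-1:ℝ)| * x ^ ((-1:ℝ) - 1)) • kker (-p) z (x ^ (-1:ℝ))) 0 (b := z⁻¹) (by positivity)
  rw [mul_zero, h1] at h2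
  have h3 : ∫ s in Ioi (0:ℝ), kker (-p) z s = z⁻¹ * ∫ x in Ioi (0:ℝ),
      (|(-1:ℝ)| * (z⁻¹ * x) ^ ((-1:ℝ) - 1)) • kker (-p) z ((z⁻¹ * x) ^ (-1:ℝ)) := by
    rw [h2]; simp only [inv_inv, smul_eq_mul]; field_simp
  rw [h3, ← integral_const_mul, ← integral_const_mul]
  refine setIntegral_congr_fun measurableSet_Ioi fun s hs => ?_
  have hs' : (0:ℝ) < s := hs
  simp only [kker, smul_eq_mul, abs_neg, abs_one, one_mul]
  rw [Real.rpow_neg_one, mul_inv, inv_inv, show ((-1:ℝ) - 1) = -2 by norm_num,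
    Real.mul_rpow (by positivity) hs'.le, Real.mul_rpow hz.le (by positivity),
    Real.inv_rpow hz.le, Real.inv_rpow hs'.le, ← Real.rpow_neg hz.le, ← Real.rpow_neg hs'.le]
  have e1 : -(z * s⁻¹) - z / (z * s⁻¹) = -s - z / s := by field_simp; ring
  rw [e1]
  have e2 : z ^ (- -2 : ℝ) = z * z := by
    rw [show (- -2 : ℝ) = 1 + 1 by norm_num, Real.rpow_add hz, Real.rpow_one]
  have e3 : z ^ (- -p - 1) = z ^ p / z := by rw [neg_neg, Real.rpow_sub_one hz.ne']
  have e4 : s ^ (-2 : ℝ) * s ^ (-(- -p - 1)) = s ^ (-p - 1) := by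
    rw [← Real.rpow_add hs']; congr 1; ring
  rw [e2, e3, ← e4]
  field_simp

lemma kf_rec (p z : ℝ) (hz : 0 < z) : z * kf (p + 1) z = p * kf p z + kf (p - 1) z := by
  have h1 := kf_hasDerivAt (-p) z hz
  have h2 := (Real.hasDerivAt_rpow_const (x := z) (p := p) (Or.inl hz.ne')).mul
    (kf_hasDerivAt p z hz)
  have h3 : (fun y => y ^ p * kf p y) =ᶠ[nhds z] kf (-p) := by
    filter_upwards [Ioi_mem_nhds hz] with y hy
    exact (kf_neg p y hy).symm
  have h4 := (h1.congr_of_eventuallyEq h3).unique h2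
  rw [show -p + 1 = -(p - 1) by ring, kf_neg _ _ hz] at h4
  have e : z ^ p = z ^ (p - 1) * z := by
    rw [← Real.rpow_add_one hz.ne']; congr 1; ring
  rw [e] at h4
  have hp : z ^ (p - 1) ≠ 0 := (Real.rpow_pos_of_pos hz _).ne'
  have : z ^ (p - 1) * (z * kf (p + 1) z) = z ^ (p - 1) * (p * kf p z + kf (p - 1) z) := by
    linarith
  exact mul_left_cancel₀ hp this

lemma kf_tendsto_zero (p : ℝ) (hp : p < 0) :
    Tendsto (kf p) (nhdsWithin 0 (Ioi 0)) (nhds (Real.Gamma (-p))) := by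
  have hG := Real.Gamma_eq_integral (s := -p) (by linarith)
  rw [hG]
  refine tendsto_integral_filter_of_dominated_convergence
    (fun s => Real.exp (-s) * s ^ (-p - 1)) ?_ ?_ (Real.GammaIntegral_convergent (by linarith)) ?_
  · exact Eventually.of_forall fun x => kker_meas _ _ _
  · filter_upwards [self_mem_nhdsWithin] with z hz
    filter_upwards [ae_restrict_mem measurableSet_Ioi] with s hs
    have hs' : (0:ℝ) < s := hs
    have hz' : (0:ℝ) < z := hz
    rw [Real.norm_of_nonneg (kker_nonneg _ _ _ hs)]
    unfold kker
    rw [mul_comm]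
    gcongr
    have : 0 ≤ z / s := by positivity
    linarith
  · filter_upwards [ae_restrict_mem measurableSet_Ioi] with s hs
    unfold kker
    rw [mul_comm (Real.exp _)]
    apply Tendsto.const_mul
    have : ContinuousAt (fun z : ℝ => Real.exp (-s - z / s)) 0 := by fun_prop
    have h := this.tendsto
    simp only [zero_div, sub_zero] at h
    exact h.mono_left nhdsWithin_le_nhds

lemma kf_continuous_param (z : ℝ) (hz : 0 < z) : Continuous (fun p => kf p z) := by
  rw [continuous_iff_continuousAt]
  intro P
  refine continuousAt_of_dominated (bound := fun s => kker (P + 1) z s + kker (P - 1) z s) ?_ ?_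
    ((kker_int _ _ hz).add (kker_int _ _ hz)) ?_
  · exact Eventually.of_forall fun x => kker_meas _ _ _
  · filter_upwards [Ioo_mem_nhds (show P - 1 < P by linarith) (show P < P + 1 by linarith)] with q hq
    filter_upwards [ae_restrict_mem measurableSet_Ioi] with s hs
    have hs' : (0:ℝ) < s := hs
    rw [Real.norm_of_nonneg (kker_nonneg _ _ _ hs)]
    unfold kker
    rw [← add_mul]
    gcongr
    rcases le_total s 1 with h | h
    · have : s ^ (-q - 1) ≤ s ^ (-(P + 1) - 1) :=
        Real.rpow_le_rpow_of_exponent_ge hs' h (by linarith [hq.2])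
      have := Real.rpow_nonneg hs'.le (-(P - 1) - 1)
      linarith
    · have : s ^ (-q - 1) ≤ s ^ (-(P - 1) - 1) :=
        Real.rpow_le_rpow_of_exponent_le h (by linarith [hq.1])
      have := Real.rpow_nonneg hs'.le (-(P + 1) - 1)
      linarith
  · filter_upwards [ae_restrict_mem measurableSet_Ioi] with s hs
    have hs' : (0:ℝ) < s := hs
    unfold kker
    apply ContinuousAt.mul _ continuousAt_const
    exact (Real.continuousAt_const_rpow hs'.ne').comp (by fun_prop)

/-- factorially bounded coefficient sequences -/
def GoodC (c : ℕ → ℝ) : Prop := ∃ C : ℝ, ∀ m, |c m| ≤ C / m.factorial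

/-- the sum of a power series -/
noncomputable def ser (c : ℕ → ℝ) (z : ℝ) : ℝ := ∑' m, c m * z ^ m

/-- coefficients of the derivative -/
def dcoef (c : ℕ → ℝ) : ℕ → ℝ := fun m => (m + 1) * c (m + 1)

lemma GoodC.dcoef {c : ℕ → ℝ} (h : GoodC c) : GoodC (dcoef c) := by
  obtain ⟨C, hC⟩ := h
  refine ⟨C, fun m => ?_⟩
  unfold _root_.dcoef
  have := hC (m + 1)
  rw [Nat.factorial_succ] at this
  push_cast at this
  rw [abs_mul, abs_of_nonneg (by positivity : (0:ℝ) ≤ m + 1)]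
  calc (m + 1 : ℝ) * |c (m + 1)| ≤ (m + 1) * (C / ((m + 1) * m.factorial)) := by gcongr
    _ = _ := by field_simp

lemma GoodC.shift {c : ℕ → ℝ} (h : GoodC c) (M : ℕ) : GoodC (fun m => c (m + M)) := by
  obtain ⟨C, hC⟩ := h
  have hC0 : 0 ≤ C := by have := (abs_nonneg _).trans (hC 0); simpa using this
  refine ⟨C, fun m => (hC (m + M)).trans ?_⟩
  have : m.factorial ≤ (m + M).factorial := Nat.factorial_le (by omega)
  gcongr

lemma GoodC.summable {c : ℕ → ℝ} (h : GoodC c) (z : ℝ) : Summable (fun m => |c m| * |z| ^ m) := by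
  obtain ⟨C, hC⟩ := h
  refine Summable.of_nonneg_of_le (fun m => by positivity) (fun m => ?_)
    ((Real.summable_pow_div_factorial |z|).mul_left C)
  calc |c m| * |z| ^ m ≤ C / m.factorial * |z| ^ m := by gcongr; exact hC m
    _ = _ := by ring

lemma GoodC.summable' {c : ℕ → ℝ} (h : GoodC c) (z : ℝ) : Summable (fun m => c m * z ^ m) := by
  refine Summable.of_norm ?_
  simpa [abs_mul, abs_pow] using h.summable z

lemma ser_hasDerivAt {c : ℕ → ℝ} (h : GoodC c) (z : ℝ) :
    HasDerivAt (ser c) (ser (dcoef c) z) z := by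
  have hd := h.dcoef
  set R := |z| + 1 with hR
  have hR0 : 0 < R := by positivity
  -- bound for terms m c_m z^(m-1)
  have hsum : Summable (fun m : ℕ => |c m| * (m * R ^ (m - 1))) := by
    rw [← summable_nat_add_iff 1]
    refine (hd.summable R).congr fun m => ?_
    unfold _root_.dcoef
    rw [abs_mul, abs_of_nonneg (by positivity : (0:ℝ) ≤ m + 1), abs_of_pos hR0]
    push_cast
    ring
  have key := hasDerivAt_tsum_of_isPreconnected (𝕜 := ℝ) (F := ℝ)
    (g := fun m y => c m * y ^ m) (g' := fun m y => c m * (m * y ^ (m - 1))) (t := Metric.ball 0 R)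
    (y₀ := 0) (y := z) hsum Metric.isOpen_ball (convex_ball _ _).isPreconnected
    (fun m y _ => (hasDerivAt_pow m y).const_mul _) (fun m y hy => ?_) (by simp [hR0])
    (h.summable' 0) (by simp [hR])
  · refine key.congr_deriv ?_
    rw [Summable.tsum_eq_zero_add]
    · simp only [Nat.cast_zero, zero_mul, mul_zero, zero_add]
      unfold ser _root_.dcoef
      refine tsum_congr fun m => ?_
      push_cast
      ring
    · rw [← summable_nat_add_iff 1]
      refine (hd.summable' z).congr fun m => ?_
      unfold _root_.dcoef
      push_cast
      ring
  · have hy' : |y| ≤ R := by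
      have := mem_ball_zero_iff.mp hy
      exact le_of_lt (by simpa using this)
    rw [norm_mul, norm_mul, norm_pow, Real.norm_eq_abs, Real.norm_eq_abs, Real.norm_eq_abs,
      Nat.abs_cast]
    gcongr

lemma ser_contDiff_nat (n : ℕ) : ∀ {c : ℕ → ℝ}, GoodC c → ContDiff ℝ n (ser c) := by
  induction n with
  | zero =>
    intro c h
    exact contDiff_zero.mpr (continuous_iff_continuousAt.mpr fun z => (ser_hasDerivAt h z).continuousAt)
  | succ n ih =>
    intro c h
    push_cast
    rw [contDiff_succ_iff_deriv]
    refine ⟨fun z => (ser_hasDerivAt h z).differentiableAt, by simp, ?_⟩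
    have : deriv (ser c) = ser (dcoef c) := funext fun z => (ser_hasDerivAt h z).deriv
    rw [this]
    exact ih h.dcoef

lemma ser_split {c : ℕ → ℝ} (h : GoodC c) (M : ℕ) (z : ℝ) :
    ser c z = ∑ m ∈ Finset.range M, c m * z ^ m + z ^ M * ser (fun m => c (m + M)) z := by
  unfold ser
  rw [← (h.summable' z).sum_add_tsum_nat_add M, ← tsum_mul_left]
  congr 1
  refine tsum_congr fun m => ?_
  ring

/-- coefficients of the normalized modified Bessel function -/
noncomputable def icoef (β : ℝ) (m : ℕ) : ℝ := 1 / (m.factorial * Real.Gamma (m + β + 1))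

lemma icoef_good (β : ℝ) : GoodC (icoef β) := by
  obtain ⟨M, hM⟩ := exists_nat_gt (1 - β)
  have hbig : ∀ m : ℕ, M ≤ m → |1 / Real.Gamma (m + β + 1)| ≤ 1 := by
    intro m hm
    have hm' : (M : ℝ) ≤ m := by exact_mod_cast hm
    have h1 : (1:ℝ) ≤ Real.Gamma (m + β + 1) := by
      have := Real.Gamma_strictMonoOn_Ici.monotoneOn (a := 2) (b := m + β + 1) (by simp)
        (by simp only [mem_Ici]; linarith) (by linarith)
      rwa [Real.Gamma_two] at this
    rw [abs_of_pos (by positivity)]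
    rw [div_le_one (by linarith)]
    exact h1
  refine ⟨1 + ∑ m ∈ Finset.range M, |1 / Real.Gamma (m + β + 1)|, fun m => ?_⟩
  have hb : |1 / Real.Gamma (m + β + 1)| ≤ 1 + ∑ m ∈ Finset.range M, |1 / Real.Gamma (m + β + 1)| := by
    by_cases h : M ≤ m
    · have := hbig m h
      have h2 : 0 ≤ ∑ m ∈ Finset.range M, |1 / Real.Gamma (m + β + 1)| :=
        Finset.sum_nonneg fun _ _ => abs_nonneg _
      linarith
    · have := Finset.single_le_sum (f := fun m : ℕ => |1 / Real.Gamma (m + β + 1)|)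
        (fun i _ => abs_nonneg _) (Finset.mem_range.mpr (not_le.mp h))
      linarith
  unfold icoef
  rw [one_div, mul_inv, abs_mul, abs_of_nonneg (by positivity : (0:ℝ) ≤ (m.factorial : ℝ)⁻¹),
    div_eq_inv_mul, ← one_div (Real.Gamma _)]
  gcongr

/-- normalized modified Bessel function in the variable `z = x²/4` -/
noncomputable def iff (β z : ℝ) : ℝ := ser (icoef β) z

lemma iff_hasDerivAt (β z : ℝ) : HasDerivAt (iff β) (iff (β + 1) z) z := by
  have h := ser_hasDerivAt (icoef_good β) z
  have : dcoef (icoef β) = icoef (β + 1) := by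
    ext m
    unfold dcoef icoef
    rw [Nat.factorial_succ]
    push_cast
    rw [show (m:ℝ) + 1 + β + 1 = m + (β + 1) + 1 by ring]
    by_cases hG : Real.Gamma (m + (β + 1) + 1) = 0
    · simp [hG]
    · field_simp
  rw [this] at h
  exact h

lemma iff_zero (β : ℝ) : iff β 0 = 1 / Real.Gamma (β + 1) := by
  unfold iff
  rw [ser_split (icoef_good β) 1]
  simp [icoef]

lemma iff_rec (β z : ℝ) (hβ : ∀ n : ℤ, β ≠ n) :
    iff (β - 1) z = z * iff (β + 1) z + β * iff β z := by
  have h1 : z * iff (β + 1) z = ∑' m : ℕ, (m * icoef β m) * z ^ m := by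
    have hs : Summable (fun m : ℕ => (m * icoef β m) * z ^ m) := by
      rw [← summable_nat_add_iff 1]
      refine (((icoef_good β).dcoef.summable' z).mul_right z).congr fun m => ?_
      unfold dcoef; push_cast; ring
    rw [hs.tsum_eq_zero_add]
    have hd : dcoef (icoef β) = icoef (β + 1) := by
      ext m
      unfold dcoef icoef
      rw [Nat.factorial_succ]
      push_cast
      rw [show (m:ℝ) + 1 + β + 1 = m + (β + 1) + 1 by ring]
      by_cases hG : Real.Gamma (m + (β + 1) + 1) = 0
      · simp [hG]
      · field_simp
    unfold iff ser
    rw [← hd, ← tsum_mul_left]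
    simp only [Nat.cast_zero, zero_mul, zero_add]
    refine tsum_congr fun m => ?_
    unfold dcoef; push_cast; ring
  have hs : Summable (fun m : ℕ => (m * icoef β m) * z ^ m) := by
    rw [← summable_nat_add_iff 1]
    refine (((icoef_good β).dcoef.summable' z).mul_right z).congr fun m => ?_
    unfold dcoef; push_cast; ring
  rw [h1]
  unfold iff ser
  rw [← tsum_mul_left, ← hs.tsum_add (((icoef_good β).summable' z).mul_left β)]
  refine tsum_congr fun m => ?_
  have hne : (m:ℝ) + β ≠ 0 := by
    intro h
    apply hβ (-m)
    push_cast; linarith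
  unfold icoef
  rw [show (m:ℝ) + (β - 1) + 1 = m + β by ring, Real.Gamma_add_one hne]
  have hG : Real.Gamma (m + β) ≠ 0 := by
    apply Real.Gamma_ne_zero
    intro n h
    apply hβ (-n - m)
    push_cast; linarith
  field_simp

/-- cross Wronskian of the two series solutions -/
lemma wronsk_ii (β z : ℝ) (hβ : ∀ n : ℤ, β ≠ n) :
    iff β z * iff (-β - 1) z - z * iff (β + 1) z * iff (-β) z
      = 1 / (Real.Gamma (β + 1) * Real.Gamma (-β)) := by
  have hβ' : ∀ n : ℤ, -β ≠ n := fun n h => hβ (-n) (by push_cast; linarith)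
  have hd : ∀ y, HasDerivAt (fun z => iff β z * iff (-β - 1) z - z * iff (β + 1) z * iff (-β) z)
      0 y := by
    intro y
    have a1 := iff_hasDerivAt β y
    have a2 := iff_hasDerivAt (-β - 1) y
    have a3 : HasDerivAt (fun z => z * iff (β + 1) z) (iff β y - β * iff (β + 1) y) y := by
      have e : (fun z => z * iff (β + 1) z) = fun z => iff (β - 1) z - β * iff β z := by
        ext z; rw [iff_rec β z hβ]; ring
      rw [e]
      have := (iff_hasDerivAt (β - 1) y).sub (a1.const_mul β)
      rwa [show β - 1 + 1 = β by ring] at this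
    have a4 := iff_hasDerivAt (-β) y
    refine ((a1.mul a2).sub (a3.mul a4)).congr_deriv ?_
    have r := iff_rec (-β) y hβ'
    rw [show -β - 1 + 1 = -β by ring]
    rw [r]; ring
  have hc := is_const_of_deriv_eq_zero (fun y => (hd y).differentiableAt) (fun y => (hd y).deriv) z 0
  rw [hc, iff_zero, iff_zero]
  rw [show -β - 1 + 1 = -β by ring]
  field_simp; ring

lemma wronsk_ik (β z : ℝ) (hz : 0 < z) (h1 : -1 < β) (hβ : ∀ n : ℤ, β ≠ n) :
    iff β z * kf (-β - 1) z + z * iff (β + 1) z * kf (-β) z = 1 := by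
  have hd : ∀ y ∈ Ioi (0:ℝ), HasDerivAt
      (fun z => iff β z * kf (-β - 1) z + z * iff (β + 1) z * kf (-β) z) 0 y := by
    intro y hy
    have a1 := iff_hasDerivAt β y
    have a2 := kf_hasDerivAt (-β - 1) y hy
    have a3 : HasDerivAt (fun z => z * iff (β + 1) z) (iff β y - β * iff (β + 1) y) y := by
      have e : (fun z => z * iff (β + 1) z) = fun z => iff (β - 1) z - β * iff β z := by
        ext z; rw [iff_rec β z hβ]; ring
      rw [e]
      have := (iff_hasDerivAt (β - 1) y).sub (a1.const_mul β)
      rwa [show β - 1 + 1 = β by ring] at this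
    have a4 := kf_hasDerivAt (-β) y hy
    refine ((a1.mul a2).add (a3.mul a4)).congr_deriv ?_
    have r := kf_rec (-β) y hy
    rw [show -β - 1 + 1 = -β by ring]
    linear_combination (-iff (β + 1) y) * r
  have hconst : ∀ y ∈ Ioi (0:ℝ), (fun z => iff β z * kf (-β - 1) z + z * iff (β + 1) z * kf (-β) z) y
      = (fun z => iff β z * kf (-β - 1) z + z * iff (β + 1) z * kf (-β) z) z := by
    intro y hy
    exact isOpen_Ioi.is_const_of_deriv_eq_zero isPreconnected_Ioi
      (fun y hy => (hd y hy).differentiableAt.differentiableWithinAt) (fun y hy => (hd y hy).deriv)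
      hy hz
  have ci : ∀ γ, Tendsto (iff γ) (nhdsWithin 0 (Ioi 0)) (nhds (1 / Real.Gamma (γ + 1))) := by
    intro γ
    rw [← iff_zero]
    exact ((iff_hasDerivAt γ 0).continuousAt.tendsto).mono_left nhdsWithin_le_nhds
  have hid : Tendsto (fun z : ℝ => z) (nhdsWithin 0 (Ioi 0)) (nhds 0) :=
    tendsto_id.mono_left nhdsWithin_le_nhds
  have lk : Tendsto (fun z => z * kf (-β) z) (nhdsWithin 0 (Ioi 0)) (nhds 0) := by
    have hne : β ≠ 0 := by simpa using hβ 0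
    rcases lt_or_gt_of_ne hne with h | h
    · have e : (fun z : ℝ => z ^ (1 + β) * kf β z) =ᶠ[nhdsWithin 0 (Ioi 0)] fun z => z * kf (-β) z := by
        filter_upwards [self_mem_nhdsWithin] with y hy
        rw [kf_neg _ _ hy, Real.rpow_add hy, Real.rpow_one]; ring
      refine Tendsto.congr' e ?_
      have t1 : Tendsto (fun z : ℝ => z ^ (1 + β)) (nhdsWithin 0 (Ioi 0)) (nhds 0) := by
        have : ContinuousAt (fun z : ℝ => z ^ (1 + β)) 0 :=
          Real.continuousAt_rpow_const _ _ (Or.inr (by linarith))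
        have h := this.tendsto
        rw [Real.zero_rpow (by linarith)] at h
        exact h.mono_left nhdsWithin_le_nhds
      simpa using t1.mul (kf_tendsto_zero β h)
    · simpa using hid.mul (kf_tendsto_zero (-β) (by linarith))
  have lim := ((ci β).mul (kf_tendsto_zero (-β - 1) (by linarith))).add ((ci (β + 1)).mul lk)
  have hG : Real.Gamma (β + 1) ≠ 0 := (Real.Gamma_pos_of_pos (by linarith)).ne'
  rw [show -(-β - 1) = β + 1 by ring, one_div_mul_cancel hG, mul_zero, add_zero] at lim
  have lim2 : Tendsto (fun y => iff β y * kf (-β - 1) y + iff (β + 1) y * (y * kf (-β) y))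
      (nhdsWithin 0 (Ioi 0)) (nhds (iff β z * kf (-β - 1) z + z * iff (β + 1) z * kf (-β) z)) := by
    refine Tendsto.congr' (f₁ := fun _ => iff β z * kf (-β - 1) z + z * iff (β + 1) z * kf (-β) z) ?_
      tendsto_const_nhds
    filter_upwards [self_mem_nhdsWithin] with y hy
    have := hconst y hy
    simp only at this
    rw [← this]; ring
  exact tendsto_nhds_unique lim2 lim

lemma kf_eq_base (β z : ℝ) (hz : 0 < z) (h0 : 0 < β) (h1 : β < 1) :
    Real.sin (Real.pi * β) * kf β z = Real.pi * (z ^ (-β) * iff (-β) z - iff β z) := by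
  have hβ : ∀ n : ℤ, β ≠ n := by
    intro n h
    rw [h] at h0 h1
    have : (0:ℤ) < n := by exact_mod_cast h0
    have : n < (1:ℤ) := by exact_mod_cast h1
    omega
  have hβ' : ∀ n : ℤ, -β ≠ n := fun n h => hβ (-n) (by push_cast; linarith)
  have w1 := wronsk_ik β z hz (by linarith) hβ
  have w2 := wronsk_ik (-β) z hz (by linarith) hβ'
  have w3 := wronsk_ii β z hβ
  have r := iff_rec (-β) z hβ'
  have kr := kf_rec β z hz
  have hn : kf (-β) z = z ^ β * kf β z := kf_neg β z hz
  have hn1 : kf (-β - 1) z = z ^ β * z * kf (β + 1) z := by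
    rw [show -β - 1 = -(β + 1) by ring, kf_neg _ _ hz, Real.rpow_add_one hz.ne']
  have hG : Real.Gamma (β + 1) * Real.Gamma (-β) = - (Real.pi / Real.sin (Real.pi * β)) := by
    have := Real.Gamma_mul_Gamma_one_sub (-β)
    rw [show 1 - -β = β + 1 by ring, mul_neg, Real.sin_neg] at this
    rw [mul_comm, this, div_neg]
  have hs : 0 < Real.sin (Real.pi * β) := Real.sin_pos_of_pos_of_lt_pi (by positivity)
    (by nlinarith [Real.pi_pos])
  rw [hG] at w3
  rw [neg_neg] at w2
  rw [hn, hn1] at w1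
  rw [show β - 1 = β - 1 from rfl] at w2
  have hzb : 0 < z ^ β := Real.rpow_pos_of_pos hz _
  have hzn : z ^ (-β) = (z ^ β)⁻¹ := Real.rpow_neg hz.le _
  have hw : Real.pi * (iff β z * iff (-β - 1) z - z * iff (β + 1) z * iff (-β) z)
     = - Real.sin (Real.pi * β) := by
    rw [w3]; field_simp [Real.pi_ne_zero]
  have hk : kf (β - 1) z = z * kf (β + 1) z - β * kf β z := by linarith
  rw [hk] at w2
  rw [hzn]
  have e2 : iff (-β) z * (z * kf (β + 1) z) + iff (-β - 1) z * kf β z = 1 := by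
    rw [r]; linear_combination w2
  have e3 : z ^ β * (Real.sin (Real.pi * β) * kf β z) = z ^ β * (Real.pi * ((z ^ β)⁻¹ * iff (-β) z - iff β z)) := by
    have : z ^ β * (Real.pi * ((z ^ β)⁻¹ * iff (-β) z - iff β z))
      = Real.pi * (iff (-β) z - z ^ β * iff β z) := by
      field_simp
    rw [this]
    linear_combination (z ^ β * kf β z) * hw - Real.pi * z ^ β * iff β z * e2 + Real.pi * iff (-β) z * w1
  exact mul_left_cancel₀ hzb.ne' e3

lemma kf_eq_step (β : ℝ) (hβ : ∀ n : ℤ, β ≠ n)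
    (h : ∀ z, 0 < z → Real.sin (Real.pi * β) * kf β z
      = Real.pi * (z ^ (-β) * iff (-β) z - iff β z)) (z : ℝ) (hz : 0 < z) :
    Real.sin (Real.pi * (β + 1)) * kf (β + 1) z
      = Real.pi * (z ^ (-(β + 1)) * iff (-(β + 1)) z - iff (β + 1) z) := by
  have hβ' : ∀ n : ℤ, -β ≠ n := fun n h => hβ (-n) (by push_cast; linarith)
  have d1 := (kf_hasDerivAt β z hz).const_mul (Real.sin (Real.pi * β))
  have d2 := (((Real.hasDerivAt_rpow_const (x := z) (p := -β) (Or.inl hz.ne')).mul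
    (iff_hasDerivAt (-β) z)).sub (iff_hasDerivAt β z)).const_mul Real.pi
  have ev : (fun y => Real.pi * (y ^ (-β) * iff (-β) y - iff β y)) =ᶠ[nhds z]
      fun y => Real.sin (Real.pi * β) * kf β y := by
    filter_upwards [Ioi_mem_nhds hz] with y hy
    exact (h y hy).symm
  have u := (d1.congr_of_eventuallyEq ev).unique d2
  have r := iff_rec (-β) z hβ'
  rw [mul_add, mul_one, Real.sin_add_pi, show -(β + 1) = -β - 1 by ring, r]
  have e : z ^ (-β) = z ^ (-β - 1) * z := by
    rw [← Real.rpow_add_one hz.ne']; congr 1; ring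
  rw [e] at u
  linear_combination u

lemma kf_eq (β z : ℝ) (hz : 0 < z) (hβ : ∀ n : ℤ, β ≠ n) :
    Real.sin (Real.pi * β) * kf β z = Real.pi * (z ^ (-β) * iff (-β) z - iff β z) := by
  have main : ∀ n : ℕ, ∀ β : ℝ, 0 < β → β < 1 → ∀ z, 0 < z →
      Real.sin (Real.pi * (β + n)) * kf (β + n) z
        = Real.pi * (z ^ (-(β + n)) * iff (-(β + n)) z - iff (β + n) z) := by
    intro n
    induction n with
    | zero => intro β h0 h1 z hz; simpa using kf_eq_base β z hz h0 h1
    | succ n ih =>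
      intro β h0 h1 z hz
      have := kf_eq_step (β + n) (fun k hk => ?_) (ih β h0 h1) z hz
      · push_cast
        rw [← add_assoc]; exact this
      · have e : β = ((k - n : ℤ) : ℝ) := by push_cast; linarith
        rw [e] at h0 h1
        have : (0:ℤ) < k - n := by exact_mod_cast h0
        have : k - n < (1:ℤ) := by exact_mod_cast h1
        omega
  have pos : ∀ β : ℝ, 0 < β → (∀ n : ℤ, β ≠ n) → ∀ z, 0 < z →
      Real.sin (Real.pi * β) * kf β z = Real.pi * (z ^ (-β) * iff (-β) z - iff β z) := by
    intro β h hn z hz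
    have := main ⌊β⌋₊ (Int.fract β) (lt_of_le_of_ne (Int.fract_nonneg β) ?_) (Int.fract_lt_one β) z hz
    · have e : Int.fract β + (⌊β⌋₊ : ℝ) = β := by
        rw [natCast_floor_eq_intCast_floor h.le]; exact Int.fract_add_floor β
      rwa [e] at this
    · intro h0
      apply hn ⌊β⌋
      have := Int.fract_add_floor β
      rw [← h0] at this
      linarith
  have hne : β ≠ 0 := by simpa using hβ 0
  rcases lt_or_gt_of_ne hne with h | h
  · have := pos (-β) (by linarith) (fun n h => hβ (-n) (by push_cast; linarith)) z hz
    rw [mul_neg, Real.sin_neg, kf_neg _ _ hz, neg_neg] at this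
    have hzb : 0 < z ^ β := Real.rpow_pos_of_pos hz _
    rw [Real.rpow_neg hz.le]
    apply mul_left_cancel₀ hzb.ne'
    have e : z ^ β * (Real.pi * ((z ^ β)⁻¹ * iff (-β) z - iff β z))
      = Real.pi * (iff (-β) z - z ^ β * iff β z) := by
      field_simp
    rw [e]
    linear_combination -this
  · exact pos β h hβ z hz

lemma besselIt_eq (α x : ℝ) : besselIt α x = iff α (x ^ 2 / 4) := by
  unfold besselIt iff ser icoef
  refine tsum_congr fun m => ?_
  rw [pow_mul, show (x / 2) ^ 2 = x ^ 2 / 4 by ring]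
  ring

lemma besselI_eq (β x : ℝ) (hx : 0 < x) : besselI β x = (x / 2) ^ β * iff β (x ^ 2 / 4) := by
  unfold besselI iff ser icoef
  rw [← tsum_mul_left]
  refine tsum_congr fun m => ?_
  rw [Real.rpow_add (by positivity), show (2 * (m:ℝ)) = ((2 * m : ℕ) : ℝ) by push_cast; ring,
    Real.rpow_natCast, pow_mul, show (x / 2) ^ 2 = x ^ 2 / 4 by ring]
  ring

lemma besselK_fun_eq (β x : ℝ) (hx : 0 < x) (hβ : ∀ n : ℤ, β ≠ n) :
    Real.pi / 2 * (besselI (-β) x - besselI β x) / Real.sin (β * Real.pi)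
      = (x / 2) ^ β * kf β (x ^ 2 / 4) / 2 := by
  have h := kf_eq β (x ^ 2 / 4) (by positivity) hβ
  have hs : Real.sin (β * Real.pi) ≠ 0 := by
    rw [Ne, Real.sin_eq_zero_iff]
    rintro ⟨n, hn⟩
    exact hβ n (mul_right_cancel₀ Real.pi_ne_zero hn).symm
  rw [mul_comm Real.pi β] at h
  rw [besselI_eq _ _ hx, besselI_eq _ _ hx]
  have hx2 : 0 < x / 2 := by positivity
  have e : (x ^ 2 / 4) ^ (-β) = (x / 2) ^ (-β) * (x / 2) ^ (-β) := by
    rw [← Real.mul_rpow hx2.le hx2.le]; congr 1; ring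
  rw [e, Real.rpow_neg hx2.le] at h
  rw [Real.rpow_neg hx2.le]
  have hp : (x / 2) ^ β ≠ 0 := (Real.rpow_pos_of_pos hx2 _).ne'
  have h' : kf β (x ^ 2 / 4) = Real.pi * (((x / 2) ^ β)⁻¹ * ((x / 2) ^ β)⁻¹ * iff (-β) (x ^ 2 / 4)
      - iff β (x ^ 2 / 4)) / Real.sin (β * Real.pi) := by
    rw [eq_div_iff hs]; linarith
  rw [h']
  field_simp

lemma besselK_eq (a x : ℝ) (hx : 0 < x) : besselK a x = (x / 2) ^ a * kf a (x ^ 2 / 4) / 2 := by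
  unfold besselK
  apply Tendsto.limUnder_eq
  have hcont : ContinuousAt (fun β => (x / 2) ^ β * kf β (x ^ 2 / 4) / 2) a := by
    have h1 : Continuous (fun β : ℝ => (x / 2) ^ β) :=
      Real.continuous_const_rpow (by positivity)
    have h2 := kf_continuous_param (x ^ 2 / 4) (by positivity)
    exact ((h1.mul h2).div_const 2).continuousAt
  refine (hcont.tendsto.mono_left nhdsWithin_le_nhds).congr' ?_
  have hint : ∀ᶠ β : ℝ in nhdsWithin a {a}ᶜ, ∀ n : ℤ, β ≠ n := by
    have hcl : IsClosed ((Set.range ((↑) : ℤ → ℝ)) \ {a}) := by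
      have : (Set.range ((↑) : ℤ → ℝ)) \ {a} = ((↑) : ℤ → ℝ) '' {n : ℤ | (n : ℝ) ≠ a} := by
        ext y; constructor
        · rintro ⟨⟨n, rfl⟩, h⟩; exact ⟨n, h, rfl⟩
        · rintro ⟨n, h, rfl⟩; exact ⟨⟨n, rfl⟩, h⟩
      rw [this]
      exact Int.isClosedEmbedding_coe_real.isClosedMap _ (isClosed_discrete _)
    have hmem : ((Set.range ((↑) : ℤ → ℝ)) \ {a})ᶜ ∈ nhds a :=
      hcl.isOpen_compl.mem_nhds (by simp)
    filter_upwards [nhdsWithin_le_nhds hmem, self_mem_nhdsWithin] with β h1 h2 n hn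
    exact h1 ⟨⟨n, hn.symm⟩, h2⟩
  filter_upwards [hint] with β hβ
  exact (besselK_fun_eq β x hx hβ).symm

lemma besselKt_eq (a x : ℝ) (hx : 0 < x) : besselKt a x = kf a (x ^ 2 / 4) / 2 := by
  unfold besselKt
  rw [besselK_eq _ _ hx, Real.rpow_neg (by positivity)]
  have hp : (x / 2) ^ a ≠ 0 := (Real.rpow_pos_of_pos (by positivity) _).ne'
  field_simp

lemma genFun_eq (μ ν t x : ℝ) (hx : 0 < x) (ht : t < 1) :
    genFun μ ν t x = (1 - t) ^ (-(μ / 2 + ν / 2 + 1)) * iff (μ / 2) (t ^ 2 * (x ^ 2 / 4 / (1 - t) ^ 2))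
      * (kf (ν / 2) (x ^ 2 / 4 / (1 - t) ^ 2) / 2) := by
  unfold genFun
  have h1 : 0 < 1 - t := by linarith
  rw [besselIt_eq, besselKt_eq _ _ (by positivity)]
  have e1 : (t * x / (1 - t)) ^ 2 / 4 = t ^ 2 * (x ^ 2 / 4 / (1 - t) ^ 2) := by field_simp
  have e2 : (x / (1 - t)) ^ 2 / 4 = x ^ 2 / 4 / (1 - t) ^ 2 := by field_simp
  have e3 : -(μ + ν + 2) / 2 = -(μ / 2 + ν / 2 + 1) := by ring
  rw [e1, e2, e3]

/-- iterated (negative) Euler operators applied to `z^k k_{a+k}(z)` -/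
noncomputable def Dk (a : ℝ) : ℕ → ℕ → ℝ → ℝ
  | 0, k, z => z ^ k * kf (a + k) z
  | n + 1, k, z => Dk a n (k + 1) z - k * Dk a n k z

lemma Dk_zero (a : ℝ) (k : ℕ) (z : ℝ) : Dk a 0 k z = z ^ k * kf (a + k) z := by rw [Dk]
lemma Dk_succ (a : ℝ) (n k : ℕ) (z : ℝ) :
    Dk a (n + 1) k z = Dk a n (k + 1) z - k * Dk a n k z := by rw [Dk]

lemma Dk_hasDerivAt (a : ℝ) (n : ℕ) : ∀ (k : ℕ) (z : ℝ), 0 < z →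
    HasDerivAt (Dk a n k) (-(Dk a (n + 1) k z) / z) z := by
  induction n with
  | zero =>
    intro k z hz
    have h := (hasDerivAt_pow k z).mul (kf_hasDerivAt (a + k) z hz)
    have e : Dk a 0 k = fun z => z ^ k * kf (a + k) z := funext fun z => Dk_zero a k z
    rw [e]
    refine h.congr_deriv ?_
    rw [Dk_succ, Dk_zero, Dk_zero]
    push_cast
    rw [← add_assoc]
    cases k with
    | zero => simp; field_simp
    | succ k => 
      simp only [Nat.add_sub_cancel]
      field_simp
      ring
  | succ n ih =>
    intro k z hz
    have e : Dk a (n + 1) k = fun z => Dk a n (k + 1) z - k * Dk a n k z :=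
      funext fun z => Dk_succ a n k z
    rw [e]
    refine ((ih (k + 1) z hz).sub ((ih k z hz).const_mul (k:ℝ))).congr_deriv ?_
    rw [Dk_succ a (n + 1) k]
    ring

open Polynomial in
/-- the functional sending `p` to `p(-θ_z) k_a (z)` -/
noncomputable def Lz (a z : ℝ) : ℝ[X] →ₗ[ℝ] ℝ :=
  Polynomial.lsum fun n => (Dk a n 0 z) • (LinearMap.id : ℝ →ₗ[ℝ] ℝ)

open Polynomial in
lemma Lz_monomial (a z : ℝ) (n : ℕ) (c : ℝ) : Lz a z (monomial n c) = Dk a n 0 z * c := by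
  simp [Lz, Polynomial.lsum_apply, Polynomial.sum_monomial_index]

open Polynomial in
lemma Lz_hasDerivAt (a : ℝ) (p : ℝ[X]) (z : ℝ) (hz : 0 < z) :
    HasDerivAt (fun z => Lz a z p) (-(Lz a z (X * p)) / z) z := by
  induction p using Polynomial.induction_on' with
  | add p q hp hq =>
    simp only [map_add, mul_add]
    refine (hp.add hq).congr_deriv ?_
    ring
  | monomial n c =>
    rw [X_mul_monomial]
    simp only [Lz_monomial]
    refine ((Dk_hasDerivAt a n 0 z hz).mul_const c).congr_deriv ?_
    ring

open Polynomial in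
/-- polynomial Pochhammer symbol -/
noncomputable def poc (p : ℝ[X]) (m : ℕ) : ℝ[X] := ∏ i ∈ Finset.range m, (p + C (i : ℝ))

open Polynomial in
lemma poc_succ (p : ℝ[X]) (m : ℕ) : poc p (m + 1) = poc p m * (p + C (m : ℝ)) := by
  unfold poc; rw [Finset.prod_range_succ]

open Polynomial in
lemma poc_zero (p : ℝ[X]) : poc p 0 = 1 := by simp [poc]

open Polynomial in
lemma Lz_C_mul (a z c : ℝ) (p : ℝ[X]) : Lz a z (C c * p) = c * Lz a z p := by
  rw [← smul_eq_C_mul, map_smul, smul_eq_mul]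

open Polynomial in
lemma Lz_pow_poc (a z : ℝ) (k : ℕ) : ∀ n : ℕ, Lz a z (X ^ n * poc X k) = Dk a n k z := by
  induction k with
  | zero =>
    intro n
    rw [poc_zero, mul_one, X_pow_eq_monomial, Lz_monomial, mul_one]
  | succ k ih =>
    intro n
    have e : (X : ℝ[X]) ^ n * poc X (k + 1) = X ^ (n + 1) * poc X k + C (k : ℝ) * (X ^ n * poc X k) := by
      rw [poc_succ]; ring
    rw [e, map_add, Lz_C_mul, ih, ih, Dk_succ]
    ring

open Polynomial in
lemma Lz_poc (a z : ℝ) (k : ℕ) : Lz a z (poc X k) = z ^ k * kf (a + k) z := by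
  have := Lz_pow_poc a z k 0
  rwa [pow_zero, one_mul, Dk_zero] at this

open Polynomial in
lemma Lz_X_of (a : ℝ) (p : ℝ[X]) (f : ℝ → ℝ) (f' z : ℝ) (hz : 0 < z)
    (h : ∀ y, 0 < y → Lz a y p = f y) (hf : HasDerivAt f f' z) : Lz a z (X * p) = -z * f' := by
  have h1 := Lz_hasDerivAt a p z hz
  have ev : f =ᶠ[nhds z] fun z => Lz a z p := by
    filter_upwards [Ioi_mem_nhds hz] with y hy
    exact (h y hy).symm
  have := (h1.congr_of_eventuallyEq ev).unique hf
  rw [← this]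
  field_simp

open Polynomial in
/-- the polynomial acting as multiplication by `z^m` -/
noncomputable def pm (a : ℝ) (m : ℕ) : ℝ[X] := poc X m * poc (X - C a) m

open Polynomial in
lemma Lz_pm (a : ℝ) (m : ℕ) : ∀ z : ℝ, 0 < z → Lz a z (pm a m) = z ^ m * kf a z := by
  induction m with
  | zero =>
    intro z hz
    have := Lz_poc a z 0
    rw [poc_zero] at this
    simp only [pm, poc_zero, mul_one, this, Nat.cast_zero, add_zero]
  | succ m ih =>
    have s1 : ∀ z : ℝ, 0 < z → Lz a z ((X + C (m:ℝ)) * pm a m) = z ^ (m + 1) * kf (a + 1) z := by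
      intro z hz
      have hd := (hasDerivAt_pow m z).mul (kf_hasDerivAt a z hz)
      have := Lz_X_of a (pm a m) (fun z => z ^ m * kf a z) _ z hz ih hd
      rw [add_mul, map_add, Lz_C_mul, this, ih z hz]
      cases m with
      | zero => simp
      | succ k => simp only [Nat.add_sub_cancel]; push_cast; ring
    intro z hz
    have hd := (hasDerivAt_pow (m + 1) z).mul (kf_hasDerivAt (a + 1) z hz)
    have := Lz_X_of a _ (fun z => z ^ (m + 1) * kf (a + 1) z) _ z hz s1 hd
    have e : pm a (m + 1) = X * ((X + C (m:ℝ)) * pm a m)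
        + C ((m:ℝ) - a) * ((X + C (m:ℝ)) * pm a m) := by
      unfold pm; rw [poc_succ, poc_succ, C_sub]; ring
    rw [e, map_add, Lz_C_mul, this, s1 z hz]
    have r := kf_rec (a + 1) z hz
    rw [show a + 1 - 1 = a by ring] at r
    simp only [Nat.add_sub_cancel]
    push_cast
    linear_combination z ^ (m + 1) * r

open Polynomial in
/-- the basic `t`-dependent building block -/
noncomputable def FF (a z B : ℝ) (p : ℝ[X]) (t : ℝ) : ℝ := (1 - t) ^ (-B) * Lz a (z / (1 - t) ^ 2) p

open Polynomial in
lemma FF_hasDerivAt (a z B : ℝ) (hz : 0 < z) (p : ℝ[X]) (t : ℝ) (ht : t < 1) :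
    HasDerivAt (FF a z B p) (FF a z (B + 1) ((C B - 2 * X) * p) t) t := by
  have h1 : 0 < 1 - t := by linarith
  have d0 : HasDerivAt (fun t : ℝ => 1 - t) (-1) t := by
    simpa using (hasDerivAt_id t).const_sub 1
  have d1 : HasDerivAt (fun t : ℝ => (1 - t) ^ (-B)) (B * (1 - t) ^ (-(B + 1))) t := by
    refine (d0.rpow_const (p := -B) (Or.inl h1.ne')).congr_deriv ?_
    rw [show -(B + 1) = -B - 1 by ring]; ring
  have d2 : HasDerivAt (fun t : ℝ => z / (1 - t) ^ 2) (2 * (z / (1 - t) ^ 2) / (1 - t)) t := by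
    have d0' : HasDerivAt (fun t : ℝ => (1 - t) ^ 2) (2 * (1 - t) * (-1)) t := by
      simpa using d0.fun_pow 2
    have hne : (fun t : ℝ => (1 - t) ^ 2) t ≠ 0 := by positivity
    refine ((hasDerivAt_const t z).div d0' hne).congr_deriv ?_
    field_simp
    ring
  have d3 := (Lz_hasDerivAt a p (z / (1 - t) ^ 2) (by positivity)).comp t d2
  refine (d1.mul d3).congr_deriv ?_
  unfold FF
  have e : (C B - 2 * X) * p = C B * p + C (-2) * (X * p) := by
    have h2 : (C (2:ℝ) : ℝ[X]) = 2 := map_ofNat C 2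
    rw [C_neg, h2]; ring
  rw [e, map_add, Lz_C_mul, Lz_C_mul]
  have e2 : (1 - t) ^ (-B) = (1 - t) ^ (-(B + 1)) * (1 - t) := by
    rw [← Real.rpow_add_one h1.ne']; congr 1; ring
  simp only [Function.comp]
  rw [e2]
  generalize Lz a (z / (1 - t) ^ 2) (X * p) = u
  generalize Lz a (z / (1 - t) ^ 2) p = v
  have hy : z / (1 - t) ^ 2 ≠ 0 := by positivity
  generalize z / (1 - t) ^ 2 = y at *
  field_simp

open Polynomial in
lemma FF_contDiffOn (a z : ℝ) (hz : 0 < z) (n : ℕ) : ∀ (B : ℝ) (p : ℝ[X]),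
    ContDiffOn ℝ n (FF a z B p) (Iio 1) := by
  induction n with
  | zero =>
    intro B p
    exact contDiffOn_zero.mpr fun t ht =>
      (FF_hasDerivAt a z B hz p t ht).continuousAt.continuousWithinAt
  | succ n ih =>
    intro B p
    push_cast
    rw [contDiffOn_succ_iff_deriv_of_isOpen isOpen_Iio]
    refine ⟨fun t ht => (FF_hasDerivAt a z B hz p t ht).differentiableAt.differentiableWithinAt,
      by simp, ?_⟩
    exact (ih (B + 1) _).congr fun t ht => (FF_hasDerivAt a z B hz p t ht).deriv

open Polynomial in
lemma FF_iter (a z B : ℝ) (hz : 0 < z) (p : ℝ[X]) (n : ℕ) : ∀ t < 1,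
    iteratedDeriv n (FF a z B p) t = FF a z (B + n) (poc (C B - 2 * X) n * p) t := by
  induction n with
  | zero => intro t ht; simp [poc_zero]
  | succ n ih =>
    intro t ht
    rw [iteratedDeriv_succ]
    have ev : iteratedDeriv n (FF a z B p) =ᶠ[nhds t] FF a z (B + n) (poc (C B - 2 * X) n * p) := by
      filter_upwards [Iio_mem_nhds ht] with y hy
      exact ih y hy
    rw [ev.deriv_eq, (FF_hasDerivAt a z (B + n) hz _ t ht).deriv, poc_succ, C_add]
    push_cast
    congr 1
    · ring
    · ring

open Polynomial in
lemma FF_iter_zero (a z B : ℝ) (hz : 0 < z) (p : ℝ[X]) (n : ℕ) :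
    iteratedDeriv n (FF a z B p) 0 = Lz a z (poc (C B - 2 * X) n * p) := by
  rw [FF_iter a z B hz p n 0 (by norm_num)]
  simp [FF]

lemma iter_pow_mul (N j : ℕ) (h : ℝ → ℝ) (hh : ContDiffAt ℝ j h 0) :
    iteratedDeriv j (fun t => t ^ N * h t) 0 / j.factorial
      = if N ≤ j then iteratedDeriv (j - N) h 0 / (j - N).factorial else 0 := by
  rw [iteratedDeriv_fun_mul (by fun_prop) hh]
  simp only [iteratedDeriv_fun_pow_zero]
  split_ifs with hN
  · rw [Finset.sum_eq_single N]
    · rw [if_pos rfl]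
      have := Nat.choose_mul_factorial_mul_factorial hN
      have h2 : ((j.choose N : ℝ) * N.factorial * (j - N).factorial) = j.factorial := by
        exact_mod_cast this
      rw [← h2]
      have : (j.choose N : ℝ) ≠ 0 := by exact_mod_cast (Nat.choose_pos hN).ne'
      field_simp
    · intro b _ hb; rw [if_neg hb]; simp
    · intro hb; exact absurd (Finset.mem_range.mpr (by omega)) hb
  · rw [Finset.sum_eq_zero, zero_div]
    intro i hi
    have := Finset.mem_range.mp hi
    rw [if_neg (by omega)]; simp

open Polynomial in
lemma LambdaF_eq (μ ν : ℝ) (j : ℕ) (x : ℝ) (hx : 0 < x) :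
    LambdaF μ ν j x = 1 / 2 * ∑ m ∈ Finset.range (j + 1), icoef (μ / 2) m *
      (if 2 * m ≤ j then
        Lz (ν / 2) (x ^ 2 / 4) (poc (C (μ / 2 + ν / 2 + 1) - 2 * X) (j - 2 * m) * pm (ν / 2) m)
          / (j - 2 * m).factorial else 0) := by
  set A := μ / 2 + ν / 2 + 1 with hA
  set a := ν / 2 with ha
  set α := μ / 2 with hα
  set z := x ^ 2 / 4 with hzdef
  have hz : 0 < z := by positivity
  set c' : ℕ → ℝ := fun m => icoef α (m + (j + 1)) with hc'
  set h : ℝ → ℝ := fun t => FF a z A (pm a 0) t * ser c' (t ^ 2 * (z / (1 - t) ^ 2)) with hh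
  have hF : ∀ p, ContDiffAt ℝ j (FF a z A p) 0 := fun p =>
    (FF_contDiffOn a z hz j A p).contDiffAt (Iio_mem_nhds (by norm_num))
  have hhc : ContDiffAt ℝ j h 0 := by
    refine (hF _).mul ?_
    refine (ser_contDiff_nat j ((icoef_good α).shift (j + 1))).contDiffAt.comp (0:ℝ) ?_
    refine ContDiffAt.mul (by fun_prop) (ContDiffAt.div (by fun_prop) (by fun_prop) (by norm_num))
  have ev : (fun t => genFun μ ν t x) =ᶠ[nhds 0] fun t => 1 / 2 * (∑ m ∈ Finset.range (j + 1),
      icoef α m * (t ^ (2 * m) * FF a z A (pm a m) t) + t ^ (2 * (j + 1)) *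
        ((fun t => (z / (1 - t) ^ 2) ^ (j + 1)) t * h t)) := by
    filter_upwards [Iio_mem_nhds (show (0:ℝ) < 1 by norm_num)] with t ht
    have ht' : 0 < 1 - t := by have : t < 1 := ht; linarith
    rw [genFun_eq μ ν t x hx ht]
    unfold iff
    rw [ser_split (icoef_good α) (j + 1)]
    simp only [hh, FF]
    have hy : 0 < z / (1 - t) ^ 2 := by positivity
    simp only [Lz_pm a _ _ hy]
    rw [← hA, ← hc']
    simp only [mul_add, add_mul, Finset.mul_sum, Finset.sum_mul]
    congr 1
    · refine Finset.sum_congr rfl fun m _ => ?_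
      rw [mul_pow, pow_mul]; ring
    · rw [mul_pow, ← pow_mul]
      simp only [← hzdef, ← ha, pow_zero, one_mul]
      ring
  unfold LambdaF
  rw [ev.iteratedDeriv_eq]
  have hzc : ContDiffAt ℝ j (fun t : ℝ => (z / (1 - t) ^ 2) ^ (j + 1)) 0 :=
    (ContDiffAt.div (by fun_prop) (by fun_prop) (by norm_num)).pow _
  rw [iteratedDeriv_const_mul_field, iteratedDeriv_fun_add, iteratedDeriv_fun_sum, mul_div_assoc,
    add_div, Finset.sum_div]
  · rw [iter_pow_mul _ _ _ (hzc.mul hhc), if_neg (by omega), add_zero]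
    congr 1
    refine Finset.sum_congr rfl fun m _ => ?_
    rw [iteratedDeriv_const_mul_field, mul_div_assoc, iter_pow_mul _ _ _ (hF _), FF_iter_zero _ _ _ hz]
  · intro m _
    exact contDiffAt_const.mul ((contDiffAt_id.pow _).mul (hF _))
  · exact ContDiffAt.sum fun m _ => contDiffAt_const.mul ((contDiffAt_id.pow _).mul (hF _))
  · exact (contDiffAt_id.pow _).mul (hzc.mul hhc)

/-- rising Pochhammer symbol -/
noncomputable def rp (x : ℝ) (m : ℕ) : ℝ := ∏ i ∈ Finset.range m, (x + i)
/-- falling Pochhammer symbol -/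
noncomputable def rd (x : ℝ) (m : ℕ) : ℝ := ∏ i ∈ Finset.range m, (x - i)

lemma rp_zero (x : ℝ) : rp x 0 = 1 := by simp [rp]
lemma rd_zero (x : ℝ) : rd x 0 = 1 := by simp [rd]
lemma rp_succ (x : ℝ) (m : ℕ) : rp x (m + 1) = rp x m * (x + m) := by
  simp [rp, Finset.prod_range_succ]
lemma rd_succ (x : ℝ) (m : ℕ) : rd x (m + 1) = rd x m * (x - m) := by
  simp [rd, Finset.prod_range_succ]
lemma rp_succ' (x : ℝ) (m : ℕ) : rp x (m + 1) = x * rp (x + 1) m := by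
  simp only [rp, Finset.prod_range_succ', Nat.cast_zero, add_zero]
  rw [mul_comm]; congr 1
  refine Finset.prod_congr rfl fun i _ => ?_
  push_cast; ring
lemma rd_succ' (x : ℝ) (m : ℕ) : rd (x + 1) (m + 1) = (x + 1) * rd x m := by
  simp only [rd, Finset.prod_range_succ', Nat.cast_zero, sub_zero]
  rw [mul_comm]; congr 1
  refine Finset.prod_congr rfl fun i _ => ?_
  push_cast; ring
lemma rp_pos (x : ℝ) (hx : 0 < x) (m : ℕ) : 0 < rp x m :=
  Finset.prod_pos fun i _ => by positivity
lemma rd_nat_eq_zero (j k : ℕ) (h : j < k) : rd j k = 0 := by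
  unfold rd
  exact Finset.prod_eq_zero (Finset.mem_range.mpr h) (by simp)

lemma Gamma_rp (x : ℝ) (hx : 0 < x) (m : ℕ) : Real.Gamma (x + m) = rp x m * Real.Gamma x := by
  induction m with
  | zero => simp [rp_zero]
  | succ m ih =>
    rw [rp_succ]
    push_cast
    rw [← add_assoc, Real.Gamma_add_one (by positivity), ih]; ring

open Polynomial in
lemma poc_eval (p : ℝ[X]) (m : ℕ) (s : ℝ) : (poc p m).eval s = rp (p.eval s) m := by
  simp [poc, rp, eval_prod]

/-- `(B)_n / n!` extended by zero to negative `n` -/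
noncomputable def bz (B : ℝ) (n : ℤ) : ℝ := if n < 0 then 0 else rp B n.toNat / n.toNat.factorial

lemma bz_neg (B : ℝ) (n : ℤ) (h : n < 0) : bz B n = 0 := by simp [bz, h]
lemma bz_nat (B : ℝ) (n : ℕ) : bz B n = rp B n / n.factorial := by simp [bz]
lemma bz_rec (B : ℝ) (n : ℤ) : n * bz B n = (n - 1 + B) * bz B (n - 1) := by
  rcases lt_trichotomy n 0 with h | h | h
  · rw [bz_neg _ _ h, bz_neg _ _ (by omega)]; simp
  · subst h; rw [bz_neg B (0 - 1) (by omega)]; simp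
  · obtain ⟨m, rfl⟩ : ∃ m : ℕ, n = (m + 1 : ℕ) := ⟨(n - 1).toNat, by omega⟩
    rw [show ((m + 1 : ℕ) : ℤ) - 1 = (m : ℤ) by push_cast; ring, bz_nat, bz_nat, rp_succ,
      Nat.factorial_succ]
    push_cast
    have : (m.factorial : ℝ) ≠ 0 := by positivity
    field_simp
    ring

/-- `(σ)_m (σ-a)_m / (m! (α+1)_m)` -/
noncomputable def fm (α a s : ℝ) (m : ℕ) : ℝ := rp s m * rp (s - a) m / (m.factorial * rp (α + 1) m)

lemma fm_rec (α a s : ℝ) (hα : 0 ≤ α) (m : ℕ) :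
    ((m : ℝ) + 1) * (m + 1 + α) * fm α a s (m + 1) = (m + s) * (m + s - a) * fm α a s m := by
  unfold fm
  rw [rp_succ, rp_succ, rp_succ, Nat.factorial_succ]
  push_cast
  have := rp_pos (α + 1) (by linarith) m
  have h2 : α + 1 + m ≠ 0 := by positivity
  field_simp
  ring

/-- the coefficient `c_j` -/
noncomputable def cc (α a s : ℝ) (N : ℕ) (j : ℤ) : ℝ :=
  ∑ m ∈ Finset.range N, bz (α + a + 1 - 2 * s) (j - 2 * m) * fm α a s m

lemma cc_rec (α a s : ℝ) (hα : 0 ≤ α) (N : ℕ) (j : ℤ) (hj : j + 1 < 2 * N) :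
    (j + 1) * (j + 1 + 2 * α) * cc α a s N (j + 1) =
      (2 * j + 2 * α + 1) * (α + a + 1 - 2 * s) * cc α a s N j
        + (j + α + a) * (j + α - a) * cc α a s N (j - 1) := by
  unfold cc
  set B := α + a + 1 - 2 * s with hB
  set G : ℕ → ℝ := fun m => 4 * m * (m + α) * fm α a s m * bz B (j + 1 - 2 * m) with hG
  have hs : ∑ m ∈ Finset.range N, G m = ∑ m ∈ Finset.range N, G (m + 1) := by
    have h1 := Finset.sum_range_succ G N
    have h2 := Finset.sum_range_succ' G N
    have h3 : G N = 0 := by simp only [hG]; rw [bz_neg _ _ (by omega)]; simp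
    have h4 : G 0 = 0 := by simp [hG]
    rw [h3] at h1; rw [h4] at h2; linarith
  have e1 : (j + 1) * (j + 1 + 2 * α) * ∑ m ∈ Finset.range N, bz B (j + 1 - 2 * m) * fm α a s m
      = ∑ m ∈ Finset.range N, (((j + 1 - 2 * m) ^ 2 + 2 * (j + 1 - 2 * m) * (2 * m + α))
        * bz B (j + 1 - 2 * m) * fm α a s m) + ∑ m ∈ Finset.range N, G m := by
    rw [← Finset.sum_add_distrib, Finset.mul_sum]
    refine Finset.sum_congr rfl fun m _ => ?_
    simp only [hG]; ring
  rw [e1, hs, Finset.mul_sum, Finset.mul_sum, ← Finset.sum_add_distrib, ← Finset.sum_add_distrib]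
  refine Finset.sum_congr rfl fun m _ => ?_
  have h1 := bz_rec B (j + 1 - 2 * m)
  have h2 := bz_rec B (j + 1 - 2 * m - 1)
  have h3 := fm_rec α a s hα m
  simp only [hG]
  rw [show j + 1 - 2 * ((m + 1 : ℕ) : ℤ) = j - 1 - 2 * m by push_cast; ring]
  rw [show j + 1 - 2 * (m : ℤ) - 1 = j - 2 * m by ring] at h1 h2
  rw [show j - 2 * (m : ℤ) - 1 = j - 1 - 2 * m by ring] at h2
  push_cast at *
  generalize bz B (j + 1 - 2 * m) = b0 at *
  generalize bz B (j - 2 * m) = b1 at *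
  generalize bz B (j - 1 - 2 * m) = b2 at *
  have hs' : s = (α + a + 1 - B) / 2 := by rw [hB]; ring
  rw [hs'] at h3 ⊢
  generalize fm α a ((α + a + 1 - B) / 2) (m + 1) = f1 at *
  generalize fm α a ((α + a + 1 - B) / 2) m = f0 at *
  set n : ℝ := j + 1 - 2 * m with hn
  have hj' : (j : ℝ) = n - 1 + 2 * m := by rw [hn]; ring
  rw [hj'] at *
  linear_combination ((n + 4 * m + 2 * α) * h1 + (n + 4 * m + 2 * α - B) * h2) * f0 + 4 * b2 * h3

/-- the hypergeometric coefficients -/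
noncomputable def rr (α a : ℝ) (j k : ℕ) : ℝ :=
  (-1) ^ k * rd j k * rp (α + a + 1) j * rp (j + 2 * α + 1) k
    / (j.factorial * k.factorial * rp (α + a + 1) k * rp (α + 1) k)

lemma rr_rec0 (α a : ℝ) (j : ℕ) :
    ((j : ℝ) + 2) * (j + 2 + 2 * α) * rr α a (j + 2) 0 =
      (2 * j + 2 * α + 3) * (α + a + 1) * rr α a (j + 1) 0
        + (j + 1 + α + a) * (j + 1 + α - a) * rr α a j 0 := by
  unfold rr
  simp only [rp_zero, rd_zero, rp_succ, Nat.factorial_succ]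
  push_cast
  simp only [Nat.factorial_zero, Nat.cast_one]
  field_simp
  ring

lemma rr_rec (α a : ℝ) (hα : 0 ≤ α) (hA : 0 < α + a + 1) (j k : ℕ) :
    ((j : ℝ) + 2) * (j + 2 + 2 * α) * rr α a (j + 2) (k + 1) =
      (2 * j + 2 * α + 3) * ((α + a + 1 + 2 * (k + 1)) * rr α a (j + 1) (k + 1)
        - 2 * rr α a (j + 1) k)
        + (j + 1 + α + a) * (j + 1 + α - a) * rr α a j (k + 1) := by
  unfold rr
  set A := α + a + 1 with hAd
  have ha : a = A - α - 1 := by rw [hAd]; ring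
  have p1 := rp_pos A hA k
  have p2 := rp_pos (α + 1) (by linarith) k
  have p3 : A + k ≠ 0 := by positivity
  have p4 : α + 1 + k ≠ 0 := by positivity
  have q1 : rp (((j + 2 : ℕ) : ℝ) + 2 * α + 1) (k + 1) = rp ((j + 1 : ℕ) + 2 * α + 1) k *
      (j + 2 * α + k + 2) * (j + 2 * α + k + 3) / (j + 2 * α + 2) := by
    have h1 := rp_succ' (((j + 1 : ℕ) : ℝ) + 2 * α + 1) (k + 1)
    rw [rp_succ, rp_succ] at h1
    have h2 : (j:ℝ) + 2 * α + 2 ≠ 0 := by positivity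
    rw [eq_div_iff h2]
    push_cast at h1 ⊢
    rw [show (j:ℝ) + 1 + 2 * α + 1 + 1 = j + 2 + 2 * α + 1 by ring] at h1
    linear_combination -h1
  have q2 : rp ((j : ℝ) + 2 * α + 1) (k + 1) = (j + 2 * α + 1) * rp ((j + 1 : ℕ) + 2 * α + 1) k := by
    rw [rp_succ']; push_cast; congr 2; ring
  have d1 : rd ((j + 2 : ℕ) : ℝ) (k + 1) = (j + 2) * rd ((j + 1 : ℕ) : ℝ) k := by
    have := rd_succ' ((j + 1 : ℕ) : ℝ) k
    push_cast at this ⊢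
    rw [show (j:ℝ) + 2 = j + 1 + 1 by ring]; exact this
  have d2 : rd (j : ℝ) (k + 1) = (j - k) * (j + 1 - k) * rd ((j + 1 : ℕ) : ℝ) k / (j + 1) := by
    have h1 := rd_succ' (j : ℝ) k
    rw [rd_succ] at h1
    have h2 : (j:ℝ) + 1 ≠ 0 := by positivity
    rw [eq_div_iff h2, rd_succ]
    push_cast
    linear_combination -(j - k) * h1
  rw [q1, q2, d1, d2, rd_succ ((j + 1 : ℕ) : ℝ), rp_succ ((j + 1 : ℕ) + 2 * α + 1)]
  generalize rd ((j + 1 : ℕ) : ℝ) k = d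
  generalize rp (((j + 1 : ℕ) : ℝ) + 2 * α + 1) k = q
  simp only [rp_succ, Nat.factorial_succ]
  push_cast
  generalize rp A k = u at *
  generalize rp (α + 1) k = v at *
  generalize rp A j = w at *
  have g1 : (j.factorial : ℝ) ≠ 0 := by positivity
  have g2 : (k.factorial : ℝ) ≠ 0 := by positivity
  have g3 : (j : ℝ) + 2 * α + 2 ≠ 0 := by positivity
  rw [ha]
  field_simp
  ring

/-- the right-hand side -/
noncomputable def dd (α a s : ℝ) (N j : ℕ) : ℝ := ∑ k ∈ Finset.range N, rr α a j k * rp s k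

lemma rr_eq_zero (α a : ℝ) (j k : ℕ) (h : j < k) : rr α a j k = 0 := by
  unfold rr; rw [rd_nat_eq_zero j k h]; simp

lemma dd_rec (α a s : ℝ) (hα : 0 ≤ α) (hA : 0 < α + a + 1) (N j : ℕ) (hN : j + 1 < N) :
    ((j : ℝ) + 2) * (j + 2 + 2 * α) * dd α a s (N + 1) (j + 2) =
      (2 * j + 2 * α + 3) * (α + a + 1 - 2 * s) * dd α a s (N + 1) (j + 1)
        + (j + 1 + α + a) * (j + 1 + α - a) * dd α a s (N + 1) j := by
  set G : ℕ → ℝ := fun k => -2 * rr α a (j + 1) k * rp s (k + 1) with hG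
  have e1 : (α + a + 1 - 2 * s) * dd α a s (N + 1) (j + 1) =
      ∑ k ∈ Finset.range (N + 1), (α + a + 1 + 2 * k) * rr α a (j + 1) k * rp s k
        + ∑ k ∈ Finset.range N, G k := by
    have : ∑ k ∈ Finset.range N, G k = ∑ k ∈ Finset.range (N + 1), G k := by
      rw [Finset.sum_range_succ]
      have : G N = 0 := by simp only [hG]; rw [rr_eq_zero _ _ _ _ hN]; simp
      rw [this, add_zero]
    rw [this, ← Finset.sum_add_distrib]
    unfold dd
    rw [Finset.mul_sum]
    refine Finset.sum_congr rfl fun k _ => ?_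
    simp only [hG, rp_succ]; ring
  rw [mul_assoc (2 * (j:ℝ) + 2 * α + 3), e1]
  unfold dd
  simp only [Finset.sum_range_succ' _ N]
  have h0 := rr_rec0 α a j
  have hk : ∑ k ∈ Finset.range N, ((j : ℝ) + 2) * (j + 2 + 2 * α) * rr α a (j + 2) (k + 1) * rp s (k + 1)
    = ∑ k ∈ Finset.range N, ((2 * j + 2 * α + 3) * ((α + a + 1 + 2 * (k + 1)) * rr α a (j + 1) (k + 1)
        - 2 * rr α a (j + 1) k)
        + (j + 1 + α + a) * (j + 1 + α - a) * rr α a j (k + 1)) * rp s (k + 1) :=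
    Finset.sum_congr rfl fun k _ => by rw [rr_rec α a hα hA]
  have hk2 : ∑ k ∈ Finset.range N, ((2 * j + 2 * α + 3) * ((α + a + 1 + 2 * (k + 1)) * rr α a (j + 1) (k + 1)
        - 2 * rr α a (j + 1) k)
        + (j + 1 + α + a) * (j + 1 + α - a) * rr α a j (k + 1)) * rp s (k + 1)
      = (2 * j + 2 * α + 3) * (∑ k ∈ Finset.range N, (α + a + 1 + 2 * ((k + 1 : ℕ) : ℝ)) * rr α a (j + 1) (k + 1) * rp s (k + 1)
        + ∑ k ∈ Finset.range N, G k) + (j + 1 + α + a) * (j + 1 + α - a) * ∑ k ∈ Finset.range N, rr α a j (k + 1) * rp s (k + 1) := by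
    rw [← Finset.sum_add_distrib, Finset.mul_sum, Finset.mul_sum, ← Finset.sum_add_distrib]
    refine Finset.sum_congr rfl fun k _ => ?_
    simp only [hG]; push_cast; ring
  rw [hk2] at hk
  have hk3 : ∑ k ∈ Finset.range N, ((j : ℝ) + 2) * (j + 2 + 2 * α) * rr α a (j + 2) (k + 1) * rp s (k + 1)
    = ((j : ℝ) + 2) * (j + 2 + 2 * α) * ∑ k ∈ Finset.range N, rr α a (j + 2) (k + 1) * rp s (k + 1) := by
    rw [Finset.mul_sum]; exact Finset.sum_congr rfl fun k _ => by ring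
  rw [hk3] at hk
  simp only [rp_zero] at *
  push_cast at *
  linear_combination hk + h0

lemma cc_eq_dd (α a s : ℝ) (hα : 0 ≤ α) (hA : 0 < α + a + 1) (N : ℕ) :
    ∀ j : ℕ, j < N → cc α a s (N + 1) j = dd α a s (N + 1) j ∧
      cc α a s (N + 1) (j + 1 : ℕ) = dd α a s (N + 1) (j + 1) := by
  intro j
  induction j with
  | zero =>
    intro hN
    obtain ⟨N, rfl⟩ : ∃ M, N = M + 1 := ⟨N - 1, by omega⟩
    constructor
    · unfold cc dd
      rw [Finset.sum_range_succ', Finset.sum_range_succ' _ (N + 1), Finset.sum_eq_zero,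
        Finset.sum_eq_zero]
      · have := bz_nat (α + a + 1 - 2 * s) 0
        simp only [Nat.cast_zero, mul_zero, sub_zero] at *
        rw [this]; simp [fm, rr, rp_zero, rd_zero]
      · intro k _; rw [rr_eq_zero _ _ _ _ (by omega)]; simp
      · intro m _; rw [bz_neg _ _ (by push_cast; omega)]; simp
    · have hc : cc α a s (N + 1 + 1) (0 + 1 : ℕ) = α + a + 1 - 2 * s := by
        unfold cc
        rw [Finset.sum_range_succ', Finset.sum_eq_zero]
        · have := bz_nat (α + a + 1 - 2 * s) 1
          simp only [Nat.cast_zero, mul_zero, sub_zero, zero_add, Nat.cast_one] at *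
          rw [this]
          simp [fm, rp]
        · intro m _; rw [bz_neg _ _ (by push_cast; omega)]; simp
      rw [hc]
      unfold dd
      rw [Finset.sum_range_succ', Finset.sum_range_succ' _ N, Finset.sum_eq_zero]
      · have h2 : α + 1 ≠ 0 := by positivity
        simp [rr, rp, rd]
        field_simp
        ring
      · intro k _; rw [rr_eq_zero _ _ _ _ (by omega)]; simp
  | succ j ih =>
    intro hN
    obtain ⟨h1, h2⟩ := ih (by omega)
    refine ⟨h2, ?_⟩
    have e1 := cc_rec α a s hα (N + 1) (j + 1) (by push_cast; omega)
    have e2 := dd_rec α a s hα hA N j (by omega)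
    rw [show (j : ℤ) + 1 - 1 = j by ring, h1, show ((j:ℤ) + 1) = (j + 1 : ℕ) by push_cast; ring, h2] at e1
    have hne : ((j : ℝ) + 2) * (j + 2 + 2 * α) ≠ 0 := by positivity
    apply mul_left_cancel₀ hne
    rw [e2]
    rw [show ((j + 1 : ℕ) : ℤ) + 1 = (j + 1 + 1 : ℕ) by push_cast; ring] at e1
    push_cast at e1 ⊢
    linear_combination e1

open Polynomial in
lemma poly_id (α a : ℝ) (hα : 0 ≤ α) (hA : 0 < α + a + 1) (j : ℕ) :
    ∑ m ∈ Finset.range (j + 1), (if 2 * m ≤ j then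
      C (1 / (m.factorial * rp (α + 1) m) / (j - 2 * m).factorial) *
        (poc (C (α + a + 1) - 2 * X) (j - 2 * m) * pm a m) else 0)
     = ∑ k ∈ Finset.range (j + 1), C (rr α a j k) * poc X k := by
  apply Polynomial.funext
  intro s
  have h := (cc_eq_dd α a s hα hA (j + 1) j (by omega)).1
  unfold cc dd at h
  rw [Finset.sum_range_succ, Finset.sum_range_succ _ (j + 1), rr_eq_zero _ _ _ _ (by omega),
    bz_neg _ _ (by push_cast; omega)] at h
  simp only [zero_mul, add_zero] at h
  simp only [eval_finsetSum, eval_mul, eval_C, poc_eval, eval_X]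
  rw [← h]
  refine Finset.sum_congr rfl fun m _ => ?_
  split_ifs with hm
  · rw [show (j:ℤ) - 2 * m = (j - 2 * m : ℕ) by omega, bz_nat]
    simp [pm, poc_eval, fm]
    ring
  · rw [bz_neg _ _ (by omega)]; simp

open Polynomial in
lemma LambdaF_eq2 (μ ν : ℝ) (hμ : 0 ≤ μ) (hA : 0 < μ / 2 + ν / 2 + 1) (j : ℕ) (x : ℝ) (hx : 0 < x) :
    LambdaF μ ν j x = 1 / (2 * Real.Gamma (μ / 2 + 1)) * ∑ k ∈ Finset.range (j + 1),
      rr (μ / 2) (ν / 2) j k * ((x ^ 2 / 4) ^ k * kf (ν / 2 + k) (x ^ 2 / 4)) := by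
  have hz : 0 < x ^ 2 / 4 := by positivity
  have h := congrArg (Lz (ν / 2) (x ^ 2 / 4)) (poly_id (μ / 2) (ν / 2) (by positivity) hA j)
  simp only [map_sum, Lz_C_mul, Lz_poc] at h
  rw [LambdaF_eq μ ν j x hx, ← h]
  have hG : 0 < Real.Gamma (μ / 2 + 1) := Real.Gamma_pos_of_pos (by positivity)
  rw [Finset.mul_sum, Finset.mul_sum]
  refine Finset.sum_congr rfl fun m _ => ?_
  have e : icoef (μ / 2) m = 1 / (m.factorial * rp (μ / 2 + 1) m) / Real.Gamma (μ / 2 + 1) := by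
    unfold icoef
    rw [show (m:ℝ) + μ / 2 + 1 = μ / 2 + 1 + m by ring, Gamma_rp _ (by positivity)]
    field_simp
  rw [e]
  split_ifs with hm
  · rw [Lz_C_mul]; field_simp
  · simp

lemma lint_gamma (K s c : ℝ) (hK : 0 ≤ K) (hs : 0 < s) (hc : 0 < c) :
    ∫⁻ x in Ioi (0:ℝ), ENNReal.ofReal (K * (x ^ (s - 1) * Real.exp (-(c * x))))
      = ENNReal.ofReal (K * (Real.Gamma s * c ^ (-s))) := by
  have h := Real.integral_rpow_mul_exp_neg_mul_Ioi hs hc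
  have hG := Real.Gamma_pos_of_pos hs
  have hi : IntegrableOn (fun t : ℝ => t ^ (s - 1) * Real.exp (-(c * t))) (Ioi 0) := by
    apply Integrable.of_integral_ne_zero
    rw [h]; positivity
  have h2 := ofReal_integral_eq_lintegral_ofReal (hi.const_mul K) (by
    filter_upwards [ae_restrict_mem measurableSet_Ioi] with x hx
    have : (0:ℝ) < x := hx
    simp only [Pi.zero_apply]
    positivity)
  rw [← h2, integral_const_mul, h, Real.rpow_neg hc.le, one_div, Real.inv_rpow hc.le]
  congr 1; ring

lemma lint_beta (K x y : ℝ) (hK : 0 ≤ K) (hx : 0 < x) (hy : 0 < y) :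
    ∫⁻ v in Ioi (0:ℝ), ENNReal.ofReal (K * (v ^ (y - 1) * (1 + v) ^ (-(x + y))))
      = ENNReal.ofReal (K * (Real.Gamma x * Real.Gamma y / Real.Gamma (x + y))) := by
  have hG := Real.Gamma_pos_of_pos (add_pos hx hy)
  have hGx := Real.Gamma_pos_of_pos hx
  have hGy := Real.Gamma_pos_of_pos hy
  set K' := K / Real.Gamma (x + y) with hK'
  have hK0 : 0 ≤ K' := by positivity
  have hKK : K = K' * Real.Gamma (x + y) := by rw [hK']; field_simp
  calc _ = ∫⁻ v in Ioi (0:ℝ), ∫⁻ r in Ioi (0:ℝ),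
        ENNReal.ofReal (K' * (v ^ (y - 1) * r ^ (x + y - 1) * Real.exp (-((1 + v) * r)))) := by
        refine setLIntegral_congr_fun measurableSet_Ioi fun v hv => ?_
        have hv' : 0 < v := hv
        have := lint_gamma (K' * v ^ (y - 1)) (x + y) (1 + v) (by positivity) (by positivity) (by positivity)
        rw [show K * (v ^ (y - 1) * (1 + v) ^ (-(x + y))) = K' * v ^ (y - 1) * (Real.Gamma (x + y) * (1 + v) ^ (-(x + y))) by rw [hKK]; ring, ← this]
        refine lintegral_congr fun r => ?_
        congr 1; ring
    _ = ∫⁻ r in Ioi (0:ℝ), ∫⁻ v in Ioi (0:ℝ),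
        ENNReal.ofReal (K' * (v ^ (y - 1) * r ^ (x + y - 1) * Real.exp (-((1 + v) * r)))) := by
        rw [lintegral_lintegral_swap]
        apply Measurable.aemeasurable
        unfold Function.uncurry
        fun_prop
    _ = ∫⁻ r in Ioi (0:ℝ), ENNReal.ofReal (K' * Real.Gamma y * (r ^ (x - 1) * Real.exp (-(1 * r)))) := by
        refine setLIntegral_congr_fun measurableSet_Ioi fun r hr => ?_
        have hr' : 0 < r := hr
        have := lint_gamma (K' * r ^ (x + y - 1) * Real.exp (-r)) y r (by positivity) hy hr'
        rw [show K' * Real.Gamma y * (r ^ (x - 1) * Real.exp (-(1 * r))) = K' * r ^ (x + y - 1) * Real.exp (-r) * (Real.Gamma y * r ^ (-y)) by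
          rw [show x + y - 1 = (x - 1) + y by ring, Real.rpow_add hr', Real.rpow_neg hr'.le, one_mul]
          have : r ^ y ≠ 0 := by positivity
          field_simp, ← this]
        refine lintegral_congr fun v => ?_
        congr 1
        rw [show -((1 + v) * r) = -r + -(r * v) by ring, Real.exp_add]; ring
    _ = _ := by
        rw [lint_gamma _ _ _ (by positivity) hx one_pos]
        congr 1
        rw [hK']; simp; field_simp

lemma ofReal_kf (p z : ℝ) (hz : 0 < z) :
    ENNReal.ofReal (kf p z) = ∫⁻ r in Ioi (0:ℝ), ENNReal.ofReal (kker p z r) := by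
  unfold kf
  refine ofReal_integral_eq_lintegral_ofReal (kker_int p z hz) ?_
  filter_upwards [ae_restrict_mem measurableSet_Ioi] with x hx
  exact kker_nonneg p z x hx

lemma ofReal_kf' (p z r : ℝ) (hz : 0 < z) (hr : 0 < r) :
    ENNReal.ofReal (kf p z) = ∫⁻ v in Ioi (0:ℝ), ENNReal.ofReal (r * kker p z (r * v)) := by
  have h := integral_comp_mul_left_Ioi (kker p z) 0 hr
  have hi := (integrableOn_Ioi_comp_mul_left_iff (kker p z) 0 hr).2 (by
    rw [mul_zero]; exact kker_int p z hz)
  rw [mul_zero, smul_eq_mul] at h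
  rw [← ofReal_integral_eq_lintegral_ofReal (hi.const_mul r), integral_const_mul, h]
  · unfold kf
    congr 1; field_simp
  · filter_upwards [ae_restrict_mem measurableSet_Ioi] with x hx
    exact mul_nonneg hr.le (kker_nonneg p z _ (mul_pos hr hx))

lemma ofReal_kk (s p q z : ℝ) (hz : 0 < z) :
    ENNReal.ofReal (z ^ (s - 1) * (kf p z * kf q z)) = ∫⁻ r in Ioi (0:ℝ), ∫⁻ v in Ioi (0:ℝ),
      ENNReal.ofReal (z ^ (s - 1) * (kker p z r * (r * kker q z (r * v)))) := by
  have hz1 : 0 ≤ z ^ (s - 1) := by positivity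
  rw [show z ^ (s - 1) * (kf p z * kf q z) = kf p z * (z ^ (s - 1) * kf q z) by ring,
    ENNReal.ofReal_mul (kf_pos p z hz), ofReal_kf p z hz, ← lintegral_mul_const' _ _ ENNReal.ofReal_ne_top]
  refine setLIntegral_congr_fun measurableSet_Ioi fun r hr => ?_
  rw [ENNReal.ofReal_mul hz1, ofReal_kf' q z r hz hr, ← lintegral_const_mul' _ _ ENNReal.ofReal_ne_top,
    ← lintegral_const_mul' _ _ ENNReal.ofReal_ne_top]
  refine lintegral_congr fun v => ?_
  rw [← ENNReal.ofReal_mul hz1, ← ENNReal.ofReal_mul (kker_nonneg p z r hr)]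
  congr 1; ring

lemma lint_moment (s p q : ℝ) (hs : 0 < s) (hp : 0 < s - p) (hq : 0 < s - q) (hpq : 0 < s - p - q) :
    ∫⁻ z in Ioi (0:ℝ), ENNReal.ofReal (z ^ (s - 1) * (kf p z * kf q z))
      = ENNReal.ofReal (Real.Gamma s * Real.Gamma (s - p) * Real.Gamma (s - q) * Real.Gamma (s - p - q)
        / Real.Gamma (2 * s - p - q)) := by
  set F : ℝ × ℝ × ℝ → ENNReal := fun w =>
    ENNReal.ofReal (w.1 ^ (s - 1) * (kker p w.1 w.2.1 * (w.2.1 * kker q w.1 (w.2.1 * w.2.2)))) with hF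
  have hFm : Measurable F := by
    simp only [hF, kker]; fun_prop
  have hG := Real.Gamma_pos_of_pos hs
  have hG' := Real.Gamma_pos_of_pos hpq
  calc _ = ∫⁻ z in Ioi (0:ℝ), ∫⁻ r in Ioi (0:ℝ), ∫⁻ v in Ioi (0:ℝ), F (z, r, v) :=
        setLIntegral_congr_fun measurableSet_Ioi fun z hz => ofReal_kk s p q z hz
    _ = ∫⁻ z in Ioi (0:ℝ), ∫⁻ v in Ioi (0:ℝ), ∫⁻ r in Ioi (0:ℝ), F (z, r, v) := by
        refine lintegral_congr fun z => ?_
        rw [lintegral_lintegral_swap]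
        apply Measurable.aemeasurable
        unfold Function.uncurry
        exact hFm.comp (by fun_prop)
    _ = ∫⁻ v in Ioi (0:ℝ), ∫⁻ z in Ioi (0:ℝ), ∫⁻ r in Ioi (0:ℝ), F (z, r, v) := by
        rw [lintegral_lintegral_swap]
        apply Measurable.aemeasurable
        unfold Function.uncurry
        have : Measurable (fun w : (ℝ × ℝ) × ℝ => F (w.1.1, w.2, w.1.2)) := hFm.comp (by fun_prop)
        exact this.lintegral_prod_right'
    _ = ∫⁻ v in Ioi (0:ℝ), ∫⁻ r in Ioi (0:ℝ), ∫⁻ z in Ioi (0:ℝ), F (z, r, v) := by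
        refine lintegral_congr fun v => ?_
        rw [lintegral_lintegral_swap]
        apply Measurable.aemeasurable
        unfold Function.uncurry
        exact hFm.comp (by fun_prop)
    _ = ∫⁻ v in Ioi (0:ℝ), ∫⁻ r in Ioi (0:ℝ), ENNReal.ofReal (Real.Gamma s * v ^ (s - q - 1) * (1 + v) ^ (-s) *
          (r ^ (s - p - q - 1) * Real.exp (-((1 + v) * r)))) := by
        refine setLIntegral_congr_fun measurableSet_Ioi fun v hv => ?_
        have hv' : 0 < v := hv
        refine setLIntegral_congr_fun measurableSet_Ioi fun r hr => ?_
        have hr' : 0 < r := hr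
        have := lint_gamma (r ^ (-p - 1) * r * (r * v) ^ (-q - 1) * Real.exp (-((1 + v) * r))) s ((1 + v) / (r * v))
          (by positivity) hs (by positivity)
        have e : Real.Gamma s * v ^ (s - q - 1) * (1 + v) ^ (-s) *
          (r ^ (s - p - q - 1) * Real.exp (-((1 + v) * r))) = (r ^ (-p - 1) * r * (r * v) ^ (-q - 1) * Real.exp (-((1 + v) * r))) * (Real.Gamma s * ((1 + v) / (r * v)) ^ (-s)) := by
          rw [Real.div_rpow (by positivity) (by positivity), Real.mul_rpow hr'.le hv'.le, Real.mul_rpow hr'.le hv'.le,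
            show s - q - 1 = (-q - 1) - (-s) by ring, Real.rpow_sub hv',
            show s - p - q - 1 = (-p - 1) + 1 + (-q - 1) - (-s) by ring, Real.rpow_sub hr', Real.rpow_add hr', Real.rpow_add hr', Real.rpow_one]
          field_simp
        simp only [hF]
        rw [e, ← this]
        refine lintegral_congr fun z => ?_
        congr 1
        unfold kker
        have e2 : Real.exp (-r - z / r) * Real.exp (-(r * v) - z / (r * v)) = Real.exp (-((1 + v) * r)) * Real.exp (-((1 + v) / (r * v) * z)) := by
          rw [← Real.exp_add, ← Real.exp_add]
          congr 1
          field_simp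
          ring
        linear_combination (z ^ (s - 1) * r ^ (-p - 1) * r * (r * v) ^ (-q - 1)) * e2
    _ = ∫⁻ v in Ioi (0:ℝ), ENNReal.ofReal (Real.Gamma s * Real.Gamma (s - p - q) * (v ^ (s - q - 1) * (1 + v) ^ (-((s - p) + (s - q))))) := by
        refine setLIntegral_congr_fun measurableSet_Ioi fun v hv => ?_
        have hv' : 0 < v := hv
        rw [lint_gamma _ _ _ (by positivity) hpq (by positivity)]
        congr 1
        rw [show -((s - p) + (s - q)) = -s + -(s - p - q) by ring, Real.rpow_add (by positivity)]
        ring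
    _ = _ := by
        rw [lint_beta _ _ _ (by positivity) hp hq]
        congr 1
        rw [show s - p + (s - q) = 2 * s - p - q by ring]; ring

lemma moment (s p q : ℝ) (hs : 0 < s) (hp : 0 < s - p) (hq : 0 < s - q) (hpq : 0 < s - p - q) :
    IntegrableOn (fun z => z ^ (s - 1) * (kf p z * kf q z)) (Ioi 0) ∧
    ∫ z in Ioi (0:ℝ), z ^ (s - 1) * (kf p z * kf q z)
      = Real.Gamma s * Real.Gamma (s - p) * Real.Gamma (s - q) * Real.Gamma (s - p - q)
        / Real.Gamma (2 * s - p - q) := by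
  have hl := lint_moment s p q hs hp hq hpq
  have h1 := Real.Gamma_pos_of_pos hs
  have h2 := Real.Gamma_pos_of_pos hp
  have h3 := Real.Gamma_pos_of_pos hq
  have h4 := Real.Gamma_pos_of_pos hpq
  have h5 := Real.Gamma_pos_of_pos (show 0 < 2 * s - p - q by linarith)
  have hn : 0 ≤ᵐ[volume.restrict (Ioi 0)] (fun z => z ^ (s - 1) * (kf p z * kf q z)) := by
    filter_upwards [ae_restrict_mem measurableSet_Ioi] with z hz
    have hz' : 0 < z := hz
    have := kf_pos p z hz
    have := kf_pos q z hz
    simp only [Pi.zero_apply]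
    positivity
  have hI : ∫ z in Ioi (0:ℝ), z ^ (s - 1) * (kf p z * kf q z)
      = Real.Gamma s * Real.Gamma (s - p) * Real.Gamma (s - q) * Real.Gamma (s - p - q)
        / Real.Gamma (2 * s - p - q) := by
    rw [integral_eq_lintegral_of_nonneg_ae hn, hl, ENNReal.toReal_ofReal (by positivity)]
    refine ContinuousOn.aestronglyMeasurable (fun z hz => ?_) measurableSet_Ioi
    have hz' : 0 < z := hz
    refine ContinuousAt.continuousWithinAt ?_
    exact (Real.continuousAt_rpow_const z (s - 1) (Or.inl hz'.ne')).mul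
      ((kf_hasDerivAt p z hz).continuousAt.mul (kf_hasDerivAt q z hz).continuousAt)
  refine ⟨?_, hI⟩
  apply Integrable.of_integral_ne_zero
  rw [hI]; positivity

lemma cov (f : ℝ → ℝ) (A : ℝ) :
    ∫ x in Ioi (0:ℝ), f (x ^ 2 / 4) * x ^ (2 * A - 1) = 2 ^ (2 * A - 1) * ∫ z in Ioi (0:ℝ), f z * z ^ (A - 1) := by
  have h1 := integral_comp_rpow_Ioi_of_pos (g := fun y : ℝ => f (1 / 4 * y) * y ^ (A - 1) / 2) (p := 2) two_pos
  have h2 := integral_comp_mul_left_Ioi (fun z : ℝ => f z * (4 * z) ^ (A - 1) / 2) 0 (show (0:ℝ) < 1 / 4 by norm_num)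
  have e1 : ∫ x in Ioi (0:ℝ), f (x ^ 2 / 4) * x ^ (2 * A - 1) = ∫ x in Ioi (0:ℝ),
      (2 * x ^ ((2:ℝ) - 1)) • (f (1 / 4 * x ^ (2:ℝ)) * (x ^ (2:ℝ)) ^ (A - 1) / 2) := by
    refine setIntegral_congr_fun measurableSet_Ioi fun x hx => ?_
    have hx' : 0 < x := hx
    simp only [smul_eq_mul]
    rw [← Real.rpow_mul hx'.le, Real.rpow_two, show 2 * A - 1 = (2 - 1) + 2 * (A - 1) by ring, Real.rpow_add hx',
      show 1 / 4 * x ^ 2 = x ^ 2 / 4 by ring]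
    ring
  rw [e1, h1]
  have e2 : ∫ y in Ioi (0:ℝ), f (1 / 4 * y) * y ^ (A - 1) / 2 = ∫ y in Ioi (0:ℝ), f (1 / 4 * y) * (4 * (1 / 4 * y)) ^ (A - 1) / 2 := by
    congr 1; ext y; congr 3; ring
  rw [e2, h2, mul_zero, smul_eq_mul, ← integral_const_mul, ← integral_const_mul]
  refine setIntegral_congr_fun measurableSet_Ioi fun x hx => ?_
  have hx' : 0 < x := hx
  rw [Real.mul_rpow (by norm_num) hx'.le, show (4:ℝ) = 2 ^ (2:ℝ) by norm_num, ← Real.rpow_mul (by norm_num),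
    show 2 * A - 1 = 2 * (A - 1) + 1 by ring, Real.rpow_add two_pos, Real.rpow_one]
  norm_num
  ring

lemma altsum (n : ℕ) (f : ℝ → ℝ) (y : ℝ) :
    ∑ l ∈ Finset.range (n + 1), (-1) ^ l * (n.choose l : ℝ) * f (y + l)
      = (-1) ^ n * (fwdDiff 1)^[n] f y := by
  rw [fwdDiff_iter_eq_sum_shift, Finset.mul_sum]
  refine Finset.sum_congr rfl fun l hl => ?_
  have hl' : l ≤ n := by have := Finset.mem_range.mp hl; omega
  obtain ⟨m, rfl⟩ := Nat.exists_eq_add_of_le hl'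
  rw [Nat.add_sub_cancel_left]
  simp only [zsmul_eq_mul, nsmul_eq_mul, mul_one]
  push_cast
  rw [pow_add]
  have : ((-1:ℝ) ^ m) * (-1) ^ m = 1 := by rw [← mul_pow]; simp
  linear_combination (-(-1:ℝ) ^ l * ((l + m).choose l : ℝ) * f (y + l)) * this

open Polynomial in
lemma altsum_poly (n : ℕ) (P : ℝ[X]) (h : P.natDegree < n) (y : ℝ) :
    ∑ l ∈ Finset.range (n + 1), (-1) ^ l * (n.choose l : ℝ) * P.eval (y + l) = 0 := by
  have := altsum n (fun x => P.eval x) y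
  rw [this, Polynomial.fwdDiff_iter_eq_zero_of_degree_lt h]; simp

lemma fwd_inv (n : ℕ) : ∀ y : ℝ, 0 < y →
    (fwdDiff 1)^[n] (fun x : ℝ => 1 / x) y = (-1) ^ n * n.factorial / rp y (n + 1) := by
  induction n with
  | zero => intro y hy; simp [rp]
  | succ n ih =>
    intro y hy
    rw [Function.iterate_succ', Function.comp, fwdDiff, ih y hy, ih (y + 1) (by positivity)]
    have h1 := rp_succ' y (n + 1)
    have h2 := rp_succ y (n + 1)
    have p1 := rp_pos y hy (n + 1)
    have p2 := rp_pos (y + 1) (by positivity) (n + 1)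
    have p3 := rp_pos y hy (n + 1 + 1)
    have e1 : 1 / rp (y + 1) (n + 1) = y / rp y (n + 1 + 1) := by
      rw [h1]; field_simp
    have e2 : 1 / rp y (n + 1) = (y + (n + 1)) / rp y (n + 1 + 1) := by
      rw [h2]; push_cast
      have : y + ((n:ℝ) + 1) ≠ 0 := by positivity
      field_simp
    rw [div_eq_mul_one_div, e1, div_eq_mul_one_div (_ * _) (rp y (n + 1)), e2, Nat.factorial_succ]
    push_cast
    field_simp
    ring

lemma altsum_inv (n : ℕ) (c : ℝ) (hc : 0 < c) :
    ∑ l ∈ Finset.range (n + 1), (-1) ^ l * (n.choose l : ℝ) * (1 / (c + l))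
      = n.factorial / rp c (n + 1) := by
  have := altsum n (fun x => 1 / x) c
  rw [this, fwd_inv n c hc]
  have : ((-1:ℝ) ^ n) * (-1) ^ n = 1 := by rw [← mul_pow]; simp
  linear_combination (n.factorial / rp c (n + 1)) * this

lemma rp_refl (x : ℝ) (j : ℕ) : rp (-x - j) j = (-1) ^ j * rp (x + 1) j := by
  unfold rp
  rw [← Finset.prod_range_reflect, show (-1:ℝ) ^ j = ∏ i ∈ Finset.range j, (-1:ℝ) by simp,
    ← Finset.prod_mul_distrib]
  refine Finset.prod_congr rfl fun i hi => ?_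
  have := Finset.mem_range.mp hi
  rw [show j - 1 - i = j - (1 + i) by omega, Nat.cast_sub (by omega)]
  push_cast; ring

open Polynomial in
lemma poc_natDegree (A : ℝ) (j : ℕ) : (poc (C A + X) j).natDegree ≤ j := by
  induction j with
  | zero => simp [poc_zero]
  | succ j ih =>
    rw [poc_succ]
    refine natDegree_mul_le.trans (add_le_add ih ?_)
    rw [show (C A + X + C (j:ℝ) : ℝ[X]) = X + C (A + j) by rw [C_add]; ring]
    exact (natDegree_X_add_C _).le

open Polynomial in
lemma S_lt (A d : ℝ) (j k : ℕ) (hk : k < j) :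
    ∑ l ∈ Finset.range (j + 1), (-1) ^ l * (j.choose l : ℝ) * (rp (A + l) k * rp (d + l) (j - 1 - k)) = 0 := by
  have h := altsum_poly j (poc (C A + X) k * poc (C d + X) (j - 1 - k)) (by
    refine lt_of_le_of_lt natDegree_mul_le ?_
    have := poc_natDegree A k
    have := poc_natDegree d (j - 1 - k)
    omega) 0
  rw [← h]
  refine Finset.sum_congr rfl fun l _ => ?_
  simp [poc_eval]

open Polynomial in
lemma S_eq (A c : ℝ) (hc : 0 < c) (j : ℕ) :
    ∑ l ∈ Finset.range (j + 1), (-1) ^ l * (j.choose l : ℝ) * (rp (A + l) j / (c + l))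
      = rp (A - c) j * (j.factorial / rp c (j + 1)) := by
  rcases Nat.eq_zero_or_pos j with rfl | hj
  · simp [rp]
  set P : ℝ[X] := poc (C A + X) j with hP
  have hd : P.natDegree ≤ j := poc_natDegree A j
  set Q : ℝ[X] := P /ₘ (X - C (-c)) with hQ
  have hQd : Q.natDegree < j := by
    rw [hQ, natDegree_divByMonic _ (monic_X_sub_C _), natDegree_X_sub_C]; omega
  have hdiv := modByMonic_add_div P (X - C (-c))
  rw [modByMonic_X_sub_C_eq_C_eval] at hdiv
  have e : ∀ l : ℕ, rp (A + l) j / (c + l) = Q.eval (0 + (l:ℝ)) + rp (A - c) j * (1 / (c + l)) := by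
    intro l
    have h := congrArg (eval (l:ℝ)) hdiv
    simp only [eval_add, eval_C, eval_mul, eval_sub, eval_X, hP, poc_eval] at h
    rw [← h, ← sub_eq_add_neg, zero_add]
    have : c + (l:ℝ) ≠ 0 := by positivity
    field_simp
    ring
  simp only [e, mul_add, Finset.sum_add_distrib]
  rw [altsum_poly j Q hQd, zero_add, ← altsum_inv j c hc, Finset.mul_sum]
  refine Finset.sum_congr rfl fun l _ => ?_
  ring

lemma rd_choose (j k : ℕ) : rd j k = j.choose k * k.factorial := by
  have h : (rd j k : ℝ) = (j.descFactorial k : ℝ) := by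
    induction k with
    | zero => simp [rd]
    | succ k ih =>
      rw [rd_succ, ih, Nat.descFactorial_succ]
      rcases le_or_gt k j with hk | hk
      · rw [Nat.cast_mul, Nat.cast_sub hk]; ring
      · rw [Nat.descFactorial_of_lt hk]; simp
  rw [h, Nat.descFactorial_eq_factorial_mul_choose]; push_cast; ring

/-- `h_k = r_{jk} (α+1)_k` -/
noncomputable def hh (α a : ℝ) (j k : ℕ) : ℝ :=
  (-1) ^ k * j.choose k * rp (α + a + 1) j * rp (j + 2 * α + 1) k / (j.factorial * rp (α + a + 1) k)

lemma rr_hh (α a : ℝ) (hα : 0 ≤ α) (j k : ℕ) : rr α a j k * rp (α + 1) k = hh α a j k := by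
  unfold rr hh
  rw [rd_choose]
  have := rp_pos (α + 1) (by linarith) k
  have : (k.factorial : ℝ) ≠ 0 := by positivity
  field_simp

lemma T_lt (α a : ℝ) (hα : 0 ≤ α) (hA : 0 < α + a + 1) (j k : ℕ) (hk : k < j) :
    ∑ l ∈ Finset.range (j + 1), hh α a j l *
      (Real.Gamma (α + a + 1 + k + l) / Real.Gamma (2 * α + 2 + k + l)) = 0 := by
  have h := S_lt (α + a + 1) (2 * α + 2 + k) j k hk
  set A := α + a + 1 with hAd
  have e : ∀ l ∈ Finset.range (j + 1), hh α a j l * (Real.Gamma (A + k + l) / Real.Gamma (2 * α + 2 + k + l))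
      = (Real.Gamma A * rp A j / (j.factorial * Real.Gamma (j + 2 * α + 1))) *
        ((-1) ^ l * (j.choose l : ℝ) * (rp (A + l) k * rp (2 * α + 2 + k + l) (j - 1 - k))) := by
    intro l _
    unfold hh
    rw [← hAd]
    have g1 : Real.Gamma (A + k + l) = rp (A + l) k * (rp A l * Real.Gamma A) := by
      rw [← Gamma_rp A hA, ← Gamma_rp _ (by positivity)]; congr 1; ring
    have g2 : rp (j + 2 * α + 1) l * Real.Gamma (j + 2 * α + 1)
        = rp (2 * α + 2 + k + l) (j - 1 - k) * Real.Gamma (2 * α + 2 + k + l) := by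
      rw [← Gamma_rp _ (by positivity), ← Gamma_rp _ (by positivity)]; congr 1
      rw [show j - 1 - k = j - (1 + k) by omega, Nat.cast_sub (by omega)]; push_cast; ring
    have p1 := rp_pos A hA l
    have p2 := Real.Gamma_pos_of_pos (show 0 < (j:ℝ) + 2 * α + 1 by positivity)
    have p3 := Real.Gamma_pos_of_pos (show 0 < 2 * α + 2 + k + (l:ℝ) by positivity)
    rw [g1, ← eq_div_iff p2.ne'] at *
    rw [g2]
    field_simp
  rw [Finset.sum_congr rfl e, ← Finset.mul_sum, h, mul_zero]

lemma T_eq (α a : ℝ) (hα : 0 ≤ α) (hA : 0 < α + a + 1) (j : ℕ) :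
    ∑ l ∈ Finset.range (j + 1), hh α a j l *
      (Real.Gamma (α + a + 1 + j + l) / Real.Gamma (2 * α + 2 + j + l))
     = (Real.Gamma (α + a + 1) * rp (α + a + 1) j / (j.factorial * Real.Gamma (j + 2 * α + 1))) *
       ((-1) ^ j * rp (α - a + 1) j * (j.factorial / rp (j + 2 * α + 1) (j + 1))) := by
  have h := S_eq (α + a + 1) (j + 2 * α + 1) (by positivity) j
  rw [show α + a + 1 - (j + 2 * α + 1) = -(α - a) - j by ring, rp_refl] at h
  rw [← h, Finset.mul_sum]
  set A := α + a + 1 with hAd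
  refine Finset.sum_congr rfl fun l _ => ?_
  unfold hh
  rw [← hAd]
  have g1 : Real.Gamma (A + j + l) = rp (A + l) j * (rp A l * Real.Gamma A) := by
    rw [← Gamma_rp A hA, ← Gamma_rp _ (by positivity)]; congr 1; ring
  have g2 : Real.Gamma (2 * α + 2 + j + l) = (j + 2 * α + 1 + l) * (rp (j + 2 * α + 1) l * Real.Gamma (j + 2 * α + 1)) := by
    rw [← Gamma_rp _ (by positivity), ← Real.Gamma_add_one (by positivity)]; congr 1
    ring
  have p1 := rp_pos A hA l
  have p2 := Real.Gamma_pos_of_pos (show 0 < (j:ℝ) + 2 * α + 1 by positivity)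
  have p3 := rp_pos (j + 2 * α + 1) (by positivity) l
  have p4 : (j:ℝ) + 2 * α + 1 + l ≠ 0 := by positivity
  rw [g1, g2]
  field_simp

/-- the double sum -/
lemma double_sum (α a : ℝ) (hα : 0 ≤ α) (hA : 0 < α + a + 1) (haα : a ≤ α) (j : ℕ) :
    ∑ k ∈ Finset.range (j + 1), ∑ l ∈ Finset.range (j + 1), rr α a j k * rr α a j l *
      (Real.Gamma (α + a + 1 + k + l) * Real.Gamma (α + 1 + l) * Real.Gamma (α + 1 + k)
        * Real.Gamma (α - a + 1) / Real.Gamma (2 * α + 2 + k + l))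
     = Real.Gamma (α + 1) ^ 2 * (Real.Gamma (j + (α + a + 1)) * Real.Gamma (j + (α - a + 1))
        / (j.factorial * (2 * j + 2 * α + 1) * Real.Gamma (j + 2 * α + 1))) := by
  have e : ∀ k ∈ Finset.range (j + 1), ∑ l ∈ Finset.range (j + 1), rr α a j k * rr α a j l *
      (Real.Gamma (α + a + 1 + k + l) * Real.Gamma (α + 1 + l) * Real.Gamma (α + 1 + k)
        * Real.Gamma (α - a + 1) / Real.Gamma (2 * α + 2 + k + l))
      = Real.Gamma (α + 1) ^ 2 * Real.Gamma (α - a + 1) * hh α a j k * ∑ l ∈ Finset.range (j + 1), hh α a j l *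
      (Real.Gamma (α + a + 1 + k + l) / Real.Gamma (2 * α + 2 + k + l)) := by
    intro k _
    rw [Finset.mul_sum]
    refine Finset.sum_congr rfl fun l _ => ?_
    rw [← rr_hh α a hα, ← rr_hh α a hα, Gamma_rp (α + 1) (by positivity), Gamma_rp (α + 1) (by positivity)]
    ring
  rw [Finset.sum_congr rfl e, Finset.sum_range_succ, Finset.sum_eq_zero, zero_add, T_eq α a hα hA]
  · unfold hh
    have p1 := rp_pos (α + a + 1) hA j
    have p2 := Real.Gamma_pos_of_pos (show 0 < (j:ℝ) + 2 * α + 1 by positivity)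
    have p3 := rp_pos (j + 2 * α + 1) (by positivity) j
    have p4 : (j:ℝ) + 2 * α + 1 + j ≠ 0 := by positivity
    have p5 : 2 * (j:ℝ) + 2 * α + 1 ≠ 0 := by positivity
    rw [add_comm (j:ℝ) (α + a + 1), add_comm (j:ℝ) (α - a + 1), Gamma_rp (α + a + 1) hA,
      Gamma_rp (α - a + 1) (by linarith), rp_succ (j + 2 * α + 1) j, Nat.choose_self]
    have hs : ((-1:ℝ) ^ j) * (-1) ^ j = 1 := by rw [← mul_pow]; simp
    rw [show (j:ℝ) + 2 * α + 1 + j = 2 * (j:ℝ) + 2 * α + 1 by ring]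
    generalize ((-1:ℝ) ^ j) = s at *
    generalize rp ((j:ℝ) + 2 * α + 1) j = u at *
    generalize Real.Gamma ((j:ℝ) + 2 * α + 1) = g at *
    field_simp
    push_cast
    linear_combination (Real.Gamma (α - a + 1) * rp (α - a + 1) j) * hs
  · intro k hk
    rw [T_lt α a hα hA j k (Finset.mem_range.mp hk), mul_zero]

lemma norm_real (μ ν : ℝ) (hμ : 0 ≤ μ) (hA : 0 < μ / 2 + ν / 2 + 1) (hνμ : ν ≤ μ) (j : ℕ) :
    ∫ x in Ioi (0 : ℝ), (LambdaF μ ν j x) ^ 2 * x ^ (μ + ν + 1)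
      = (2 : ℝ) ^ (μ + ν - 1) * Real.Gamma (j + (μ + ν + 2) / 2)
          * Real.Gamma (j + (μ - ν + 2) / 2)
          / (j.factorial * (2 * j + μ + 1) * Real.Gamma (j + μ + 1)) := by
  set α := μ / 2 with hα'
  set a := ν / 2 with ha'
  have hα : 0 ≤ α := by positivity
  have haα : a ≤ α := by rw [hα', ha']; linarith
  have hμ2 : μ = 2 * α := by rw [hα']; ring
  have hν2 : ν = 2 * a := by rw [ha']; ring
  set f : ℝ → ℝ := fun z => (1 / (2 * Real.Gamma (α + 1)) * ∑ k ∈ Finset.range (j + 1),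
      rr α a j k * (z ^ k * kf (a + k) z)) ^ 2 with hf
  have h1 : ∫ x in Ioi (0 : ℝ), (LambdaF μ ν j x) ^ 2 * x ^ (μ + ν + 1)
      = ∫ x in Ioi (0 : ℝ), f (x ^ 2 / 4) * x ^ (2 * (α + a + 1) - 1) := by
    refine setIntegral_congr_fun measurableSet_Ioi fun x hx => ?_
    have := LambdaF_eq2 μ ν hμ hA j x hx
    simp only [hf]
    rw [this, show μ + ν + 1 = 2 * (α + a + 1) - 1 by rw [hμ2, hν2]; ring]
  rw [h1, cov]
  have hm := fun k l : ℕ => moment (α + a + 1 + k + l) (a + k) (a + l) (by positivity)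
    (by have : (0:ℝ) ≤ l := Nat.cast_nonneg l
        linarith) (by have : (0:ℝ) ≤ k := Nat.cast_nonneg k
                      linarith) (by linarith)
  have h2 : ∫ z in Ioi (0:ℝ), f z * z ^ (α + a + 1 - 1) = ∫ z in Ioi (0:ℝ),
      ∑ k ∈ Finset.range (j + 1), ∑ l ∈ Finset.range (j + 1),
        (1 / (2 * Real.Gamma (α + 1))) ^ 2 * (rr α a j k * rr α a j l) *
          (z ^ (α + a + 1 + k + l - 1) * (kf (a + k) z * kf (a + l) z)) := by
    refine setIntegral_congr_fun measurableSet_Ioi fun z hz => ?_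
    have hz' : 0 < z := hz
    simp only [hf]
    rw [mul_pow, pow_two (∑ k ∈ Finset.range (j + 1), _), Finset.sum_mul_sum, Finset.mul_sum, Finset.sum_mul]
    refine Finset.sum_congr rfl fun k _ => ?_
    rw [Finset.mul_sum, Finset.sum_mul]
    refine Finset.sum_congr rfl fun l _ => ?_
    rw [show α + a + 1 + k + l - 1 = (α + a + 1 - 1) + k + l by ring, Real.rpow_add hz', Real.rpow_add hz',
      Real.rpow_natCast, Real.rpow_natCast]
    ring
  have h3 : ∫ z in Ioi (0:ℝ), f z * z ^ (α + a + 1 - 1) = (1 / (2 * Real.Gamma (α + 1))) ^ 2 *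
      ∑ k ∈ Finset.range (j + 1), ∑ l ∈ Finset.range (j + 1), rr α a j k * rr α a j l *
      (Real.Gamma (α + a + 1 + k + l) * Real.Gamma (α + 1 + l) * Real.Gamma (α + 1 + k)
        * Real.Gamma (α - a + 1) / Real.Gamma (2 * α + 2 + k + l)) := by
    rw [h2, integral_finsetSum, Finset.mul_sum]
    · refine Finset.sum_congr rfl fun k _ => ?_
      rw [integral_finsetSum, Finset.mul_sum]
      · refine Finset.sum_congr rfl fun l _ => ?_
        rw [integral_const_mul, (hm k l).2]
        rw [show α + a + 1 + k + l - (a + k) - (a + l) = α - a + 1 by ring,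
          show α + a + 1 + k + l - (a + k) = α + 1 + l by ring,
          show α + a + 1 + k + l - (a + l) = α + 1 + k by ring,
          show 2 * (α + a + 1 + k + l) - (a + k) - (a + l) = 2 * α + 2 + k + l by ring]
        ring
      · intro l _
        exact (hm k l).1.const_mul _
    · intro k _
      exact integrable_finsetSum _ fun l _ => (hm k l).1.const_mul _
  rw [h3, double_sum α a hα hA haα]
  have hG := Real.Gamma_pos_of_pos (show 0 < α + 1 by positivity)
  rw [hμ2, hν2, show (2 * α + 2 * a + 2) / 2 = α + a + 1 by ring, show (2 * α - 2 * a + 2) / 2 = α - a + 1 by ring,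
    show 2 * (α + a + 1) - 1 = (2 * α + 2 * a - 1) + 2 by ring, Real.rpow_add two_pos, Real.rpow_two]
  field_simp

/-- **Corollary 4.1.** The squared `L²`-norm of `Λ_j^{μ,ν}`. -/
theorem lambda_L2_norm (μ ν : ℤ) (hcond : IntCond μ ν) (j : ℕ) :
    ∫ x in Set.Ioi (0 : ℝ), (LambdaF μ ν j x) ^ 2 * x ^ ((μ : ℝ) + ν + 1)
      = (2 : ℝ) ^ ((μ : ℝ) + ν - 1) * Real.Gamma (j + ((μ : ℝ) + ν + 2) / 2)
          * Real.Gamma (j + ((μ : ℝ) - ν + 2) / 2)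
          / (j.factorial * (2 * j + (μ : ℝ) + 1) * Real.Gamma (j + (μ : ℝ) + 1)) := by
  obtain ⟨h1, h2, _, h4⟩ := hcond
  have hμ : 0 ≤ μ := by
    by_contra hc
    exact h4 ⟨by omega, by omega⟩
  have h1' : (-1 : ℝ) ≤ ν := by exact_mod_cast h1
  have h2' : (ν : ℝ) ≤ μ := by exact_mod_cast h2
  have hμ' : (0 : ℝ) ≤ μ := by exact_mod_cast hμ
  exact norm_real μ ν hμ' (by linarith) h2' j
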